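/- arXiv:1207.4819 — 4 statements merged into one kernel-verified Lean document; each statement's English description precedes it below -/
import Mathlib

section
/- Minimax lower bound (sparse case): There exist constants c₁, c₂ > 0 (depending only on the constant c) such that for every n ≥ 1, r ∈ {1,…,m}, ρ > 0, a > 0, setting δₙ⁽⁴⁾(r,ρ,a) := max_{l₀ ≤ l ≤ m} [ (a²·(min(r,l))·l/n) ∧ (ρ²/λ_l) ∧ ( (a²/(d·log m))·(l²/m²) ) ], for every estimator Ŝₙ (a measurable map from (V×V×ℝ)ⁿ to 𝒮_V): sup_{P ∈ 𝒫_{r,ρ,a}} P^{⊗n}{ ‖Ŝₙ − S_P‖²_{L₂(Π²)} ≥ c₁·δₙ⁽⁴⁾(r,ρ,a) } ≥ c₂. -/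
open MeasureTheory Finset
open scoped ENNReal NNReal

noncomputable section

/-- Sample space for one observation: a pair of vertices `(X, X')` and a response `Y`. -/
abbrev Obs (m : ℕ) := Fin m × Fin m × ℝ

/-- Squared Hilbert–Schmidt (Frobenius) norm of a kernel. -/
def hsNormSq {m : ℕ} (S : Matrix (Fin m) (Fin m) ℝ) : ℝ := ∑ u, ∑ v, (S u v) ^ 2

/-- Squared `L₂(Π²)` norm: `‖S‖²_{L₂(Π²)} = m⁻² ‖S‖₂²`. -/
def l2PiSq {m : ℕ} (S : Matrix (Fin m) (Fin m) ℝ) : ℝ := hsNormSq S / (m : ℝ) ^ 2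

/-- Squared Sobolev (Hilbert–Schmidt) norm `‖W^{1/2}S‖₂² = ∑ₖ λₖ ‖S φₖ‖²`,
expressed through the eigendata `(lam, φ)` of `W` (indexed by `1,…,m`). -/
def sobolevHSSq {m : ℕ} (lam : ℕ → ℝ) (φ : ℕ → Fin m → ℝ)
    (S : Matrix (Fin m) (Fin m) ℝ) : ℝ :=
  ∑ k ∈ Finset.Icc 1 m, lam k * ∑ u, (S.mulVec (φ k) u) ^ 2

/-- `φ₁,…,φ_m` are orthonormal in `ℝ^V` (Euclidean inner product). -/
def OrthonormalFamily (m : ℕ) (φ : ℕ → Fin m → ℝ) : Prop :=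
  ∀ j ∈ Finset.Icc 1 m, ∀ k ∈ Finset.Icc 1 m,
    (∑ v, φ j v * φ k v) = if j = k then (1 : ℝ) else 0

/-- Eigendata of the positive semidefinite kernel `W`: orthonormal eigenfunctions `φ`,
nonnegative nondecreasing eigenvalues `lam` (indexed by `1,…,m`), `k0` the smallest index
of a positive eigenvalue, and `λ_{k+1} ≤ c·λ_k` for `k ≥ k0`. -/
structure IsEigenData (m : ℕ) (c : ℝ) (lam : ℕ → ℝ) (φ : ℕ → Fin m → ℝ) (k0 : ℕ) : Prop where
  orth : OrthonormalFamily m φ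
  nonneg : ∀ k ∈ Finset.Icc 1 m, 0 ≤ lam k
  mono : ∀ k l : ℕ, 1 ≤ k → k ≤ l → l ≤ m → lam k ≤ lam l
  k0_mem : 1 ≤ k0 ∧ k0 ≤ m ∧ 0 < lam k0
  k0_min : ∀ k ∈ Finset.Icc 1 m, 0 < lam k → k0 ≤ k
  ratio : ∀ k : ℕ, k0 ≤ k → k + 1 ≤ m → lam (k + 1) ≤ c * lam k

/-- The design `(X, X')` is uniformly distributed on `V × V`. -/
def UniformDesign (m : ℕ) (P : Measure (Obs m)) : Prop :=
  ∀ u v : Fin m, P {z : Obs m | z.1 = u ∧ z.2.1 = v} = ((m : ℝ≥0∞) ^ 2)⁻¹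

/-- The regression kernel `S_P(u,v) = m²·E_P[Y·1{X=u, X'=v}] = E_P(Y | X=u, X'=v)`. -/
def regKernel (m : ℕ) (P : Measure (Obs m)) : Matrix (Fin m) (Fin m) ℝ :=
  Matrix.of fun u v =>
    (m : ℝ) ^ 2 * ∫ z : Obs m, (if z.1 = u ∧ z.2.1 = v then z.2.2 else 0) ∂P

/-- Membership in the class `𝒫_{r,ρ,a}` of sampling distributions. -/
def MemP (m : ℕ) (r : ℕ) (ρ a : ℝ) (lam : ℕ → ℝ) (φ : ℕ → Fin m → ℝ)
    (P : Measure (Obs m)) : Prop :=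
  IsProbabilityMeasure P ∧ UniformDesign m P ∧ (∀ᵐ z ∂P, |z.2.2| ≤ a) ∧
    (regKernel m P).IsSymm ∧ (regKernel m P).rank ≤ r ∧
    sobolevHSSq lam φ (regKernel m P) ≤ ρ ^ 2 * (m : ℝ) ^ 2


/-- The sparsity parameter `d := max_{v∈V} card{j : φ_j(v) ≠ 0}`. -/
def sparsity (m : ℕ) (φ : ℕ → Fin m → ℝ) : ℕ :=
  Finset.univ.sup fun v : Fin m => ((Finset.Icc 1 m).filter fun j => φ j v ≠ 0).card

/-- The quantity `δₙ⁽⁴⁾(r,ρ,a)` (with value in `ℝ≥0∞`, so that `ρ²/λ_l = ∞` when `λ_l = 0`). -/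
def delta4 (m n r l0 d : ℕ) (ρ a : ℝ) (lam : ℕ → ℝ) : ℝ≥0∞ :=
  ⨆ l ∈ Finset.Icc l0 m,
    min (ENNReal.ofReal (a ^ 2 * (min r l : ℝ) * (l : ℝ) / n))
      (min (ENNReal.ofReal (ρ ^ 2) / ENNReal.ofReal (lam l))
        (ENNReal.ofReal
          ((a ^ 2 / (d * Real.log m)) * ((l : ℝ) ^ 2 / (m : ℝ) ^ 2))))

def sg (b : Bool) : ℝ := if b then 1 else -1

lemma sg_sq (b : Bool) : sg b * sg b = 1 := by cases b <;> simp [sg]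

lemma exp_sum_signs {I : Type} [Fintype I] [DecidableEq I] (c : I → ℝ) (t : ℝ) :
    ∑ σ : I → Bool, Real.exp (t * ∑ i, sg (σ i) * c i) ≤
      2 ^ Fintype.card I * Real.exp (t ^ 2 * (∑ i, c i ^ 2) / 2) := by
  have h1 : ∀ σ : I → Bool, Real.exp (t * ∑ i, sg (σ i) * c i)
      = ∏ i, Real.exp (t * (sg (σ i) * c i)) := by
    intro σ
    rw [Finset.mul_sum, Real.exp_sum]
  simp_rw [h1]
  have h2 := (Finset.prod_univ_sum (fun _ : I => (Finset.univ : Finset Bool))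
    (fun i b => Real.exp (t * (sg b * c i))))
  rw [Fintype.piFinset_univ] at h2
  rw [← h2]
  calc _ ≤ ∏ i : I, (2 * Real.exp ((t * c i) ^ 2 / 2)) := by
        apply Finset.prod_le_prod
        · intro i _; positivity
        · intro i _
          have := Real.cosh_le_exp_half_sq (t * c i)
          rw [Real.cosh_eq] at this
          simp only [Fintype.sum_bool, sg]
          simp
          linarith
    _ = _ := by
        rw [Finset.prod_mul_distrib, ← Real.exp_sum]
        simp
        rw [Finset.mul_sum, Finset.sum_div]
        exact Finset.sum_congr rfl fun i _ => by ring

lemma hoef {I : Type} [Fintype I] [DecidableEq I] (c : I → ℝ) (v L : ℝ) (hv : 0 < v)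
    (hc : ∑ i, c i ^ 2 ≤ v) (hL : 0 ≤ L) :
    (((Finset.univ.filter fun σ : I → Bool => 16 * v * L < (∑ i, sg (σ i) * c i) ^ 2).card : ℕ) : ℝ)
      ≤ 2 * Real.exp (-8 * L) * 2 ^ Fintype.card I := by
  set t := Real.sqrt (16 * L / v) with ht
  have ht2 : t ^ 2 = 16 * L / v := Real.sq_sqrt (by positivity)
  have ht0 : 0 ≤ t := Real.sqrt_nonneg _
  have key : ∀ σ : I → Bool, (if 16 * v * L < (∑ i, sg (σ i) * c i) ^ 2 then (1 : ℝ) else 0) ≤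
      Real.exp (-16 * L) * (Real.exp (t * ∑ i, sg (σ i) * c i)
        + Real.exp ((-t) * ∑ i, sg (σ i) * c i)) := by
    intro σ
    set x := ∑ i, sg (σ i) * c i
    split_ifs with h
    · have h3 : 16 * L ≤ t * |x| := by
        apply le_of_sq_le_sq _ (by positivity)
        rw [mul_pow t, sq_abs, ht2]
        have : 16 * L / v * (16 * v * L) ≤ 16 * L / v * x ^ 2 := by gcongr
        calc _ = 16 * L / v * (16 * v * L) := by field_simp
          _ ≤ _ := this
      have h4 : Real.exp (t * |x|) ≤ Real.exp (t * x) + Real.exp (-t * x) := by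
        rcases abs_cases x with ⟨h, _⟩ | ⟨h, _⟩ <;> rw [h]
        · linarith [Real.exp_pos (-t * x)]
        · rw [mul_neg, ← neg_mul]; linarith [Real.exp_pos (t * x)]
      calc (1 : ℝ) = Real.exp (-16 * L) * Real.exp (16 * L) := by
            rw [← Real.exp_add]; simp
        _ ≤ Real.exp (-16 * L) * Real.exp (t * |x|) := by gcongr
        _ ≤ _ := by gcongr
    · positivity
  have h5 := Finset.sum_le_sum (fun σ (_ : σ ∈ (Finset.univ : Finset (I → Bool))) => key σ)
  rw [Finset.sum_boole, ← Finset.mul_sum, Finset.sum_add_distrib] at h5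
  have e1 := exp_sum_signs c t
  have e2 := exp_sum_signs c (-t)
  have hb : t ^ 2 * (∑ i, c i ^ 2) / 2 ≤ 8 * L := by
    have : t ^ 2 * (∑ i, c i ^ 2) ≤ t ^ 2 * v := by gcongr
    have h6 : t ^ 2 * v = 16 * L := by rw [ht2]; field_simp
    linarith
  rw [neg_sq] at e2
  have hb' : Real.exp (t ^ 2 * (∑ i, c i ^ 2) / 2) ≤ Real.exp (8 * L) := Real.exp_le_exp.mpr hb
  refine h5.trans ?_
  calc _ ≤ Real.exp (-16 * L) * (2 ^ Fintype.card I * Real.exp (8 * L)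
          + 2 ^ Fintype.card I * Real.exp (8 * L)) := by
        gcongr
        · exact e1.trans (by gcongr)
        · exact e2.trans (by gcongr)
    _ = 2 * (Real.exp (-16 * L) * Real.exp (8 * L)) * 2 ^ Fintype.card I := by ring
    _ = _ := by rw [← Real.exp_add]; ring_nf

lemma hoef_union {I K : Type} [Fintype I] [DecidableEq I] [Fintype K] (c : K → I → ℝ) (v : ℝ)
    (m : ℕ) (hm : 2 ≤ Real.log m) (hK : Fintype.card K ≤ m ^ 2) (hv : 0 < v)
    (hc : ∀ k, ∑ i, c k i ^ 2 ≤ v) :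
    (((Finset.univ.filter fun σ : I → Bool =>
        ∃ k, 16 * v * Real.log m < (∑ i, sg (σ i) * c k i) ^ 2).card : ℕ) : ℝ)
      ≤ 2 ^ Fintype.card I / 64 := by
  classical
  set L := Real.log m with hL
  have hm0 : (0 : ℝ) < m := by
    rcases Nat.eq_zero_or_pos m with h | h
    · subst h; simp at hL; linarith
    · exact_mod_cast h
  have hsub : (Finset.univ.filter fun σ : I → Bool =>
        ∃ k, 16 * v * L < (∑ i, sg (σ i) * c k i) ^ 2) ⊆
      Finset.univ.biUnion fun k => Finset.univ.filter fun σ : I → Bool =>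
        16 * v * L < (∑ i, sg (σ i) * c k i) ^ 2 := by
    intro σ h
    simpa using h
  have h1 := (Finset.card_le_card hsub).trans Finset.card_biUnion_le
  have h2 : (((Finset.univ.filter fun σ : I → Bool =>
        ∃ k, 16 * v * L < (∑ i, sg (σ i) * c k i) ^ 2).card : ℕ) : ℝ) ≤
        ∑ k : K, 2 * Real.exp (-8 * L) * 2 ^ Fintype.card I := by
    refine (Nat.cast_le.mpr h1).trans ?_
    push_cast
    exact Finset.sum_le_sum fun k _ => hoef (c k) v L hv (hc k) (by linarith)
  refine h2.trans ?_
  rw [Finset.sum_const, nsmul_eq_mul, Finset.card_univ]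
  have hK' : (Fintype.card K : ℝ) ≤ Real.exp (2 * L) := by
    calc (Fintype.card K : ℝ) ≤ (m : ℝ) ^ 2 := by exact_mod_cast hK
      _ = Real.exp (2 * L) := by
        rw [two_mul, Real.exp_add, hL, Real.exp_log hm0]; ring
  have h3 : Real.exp (-6 * L) ≤ 1 / 128 := by
    have : Real.exp (-6 * L) ≤ Real.exp (-12) := Real.exp_le_exp.mpr (by linarith)
    have h4 : Real.exp (-12) = (Real.exp (-1)) ^ 12 := by
      rw [← Real.exp_nat_mul]; norm_num
    have h5 : Real.exp (-1) ≤ 1 / 2 := by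
      have := Real.exp_one_gt_d9
      rw [Real.exp_neg, one_div]
      gcongr
      linarith
    have h6 : (Real.exp (-1)) ^ 12 ≤ (1 / 2) ^ 12 := by gcongr
    have : ((1 : ℝ) / 2) ^ 12 ≤ 1 / 128 := by norm_num
    linarith
  calc _ ≤ Real.exp (2 * L) * (2 * Real.exp (-8 * L) * 2 ^ Fintype.card I) := by gcongr
    _ = 2 * (Real.exp (2 * L) * Real.exp (-8 * L)) * 2 ^ Fintype.card I := by ring
    _ = 2 * Real.exp (-6 * L) * 2 ^ Fintype.card I := by rw [← Real.exp_add]; ring_nf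
    _ ≤ 2 * (1 / 128) * 2 ^ Fintype.card I := by gcongr
    _ = _ := by ring

def flipAt {I : Type} [DecidableEq I] (σ : I → Bool) (i : I) : I → Bool :=
  Function.update σ i (!σ i)

lemma flipAt_flipAt {I : Type} [DecidableEq I] (σ : I → Bool) (i : I) :
    flipAt (flipAt σ i) i = σ := by
  ext j
  by_cases h : j = i
  · subst h; simp [flipAt]
  · simp [flipAt, h]

def ham {I : Type} [Fintype I] (σ τ : I → Bool) : ℝ := ∑ i, if σ i ≠ τ i then (1 : ℝ) else 0

lemma assouad {I X : Type} [Fintype I] [DecidableEq I] [Nonempty I] [Fintype X]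
    (p : (I → Bool) → X → ℝ) (hp : ∀ σ x, 0 ≤ p σ x) (hsum : ∀ σ, ∑ x, p σ x = 1)
    (haff : ∀ σ i, 1 / 8 ≤ ∑ x, min (p σ x) (p (flipAt σ i) x)) (est : X → I → Bool) :
    (2 : ℝ) ^ Fintype.card I / 32 ≤ ∑ σ, ∑ x,
      if (Fintype.card I : ℝ) / 32 ≤ ham (est x) σ then p σ x else 0 := by
  set N : ℝ := ((Fintype.card I : ℕ) : ℝ) with hN
  have hN0 : 0 < N := by rw [hN]; exact_mod_cast Fintype.card_pos
  have hcard : ∑ σ : I → Bool, (1 : ℝ) = 2 ^ Fintype.card I := by simp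
  have hi : ∀ i : I, (2 : ℝ) ^ Fintype.card I / 16 ≤
      ∑ σ, ∑ x, p σ x * (if est x i ≠ σ i then (1 : ℝ) else 0) := by
    intro i
    set F : (I → Bool) → ℝ := fun σ => ∑ x, p σ x * (if est x i ≠ σ i then (1 : ℝ) else 0) with hF
    have hinv : ∑ σ, F (flipAt σ i) = ∑ σ, F σ := by
      let e : (I → Bool) ≃ (I → Bool) :=
        ⟨fun σ => flipAt σ i, fun σ => flipAt σ i, fun σ => flipAt_flipAt σ i, fun σ => flipAt_flipAt σ i⟩
      exact Equiv.sum_comp e F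
    have h1 : ∀ σ, 1 / 8 ≤ F σ + F (flipAt σ i) := by
      intro σ
      refine (haff σ i).trans ?_
      rw [hF, ← Finset.sum_add_distrib]
      apply Finset.sum_le_sum
      intro x _
      have hf : flipAt σ i i = !σ i := by simp [flipAt]
      rw [hf]
      cases h1 : est x i <;> cases h2 : σ i <;> simp
    have h2 := Finset.sum_le_sum (fun σ (_ : σ ∈ (Finset.univ : Finset (I → Bool))) => h1 σ)
    rw [Finset.sum_add_distrib, hinv] at h2
    have h3 : ∑ σ : I → Bool, (1 / 8 : ℝ) = 2 ^ Fintype.card I / 8 := by simp; ring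
    rw [h3] at h2
    linarith
  have htot : N * ((2 : ℝ) ^ Fintype.card I / 16) ≤ ∑ σ, ∑ x, p σ x * ham (est x) σ := by
    have h1 := Finset.sum_le_sum (fun i (_ : i ∈ (Finset.univ : Finset I)) => hi i)
    rw [Finset.sum_const, nsmul_eq_mul, Finset.card_univ] at h1
    refine h1.trans (le_of_eq ?_)
    rw [Finset.sum_comm]
    refine Finset.sum_congr rfl fun σ _ => ?_
    rw [Finset.sum_comm]
    refine Finset.sum_congr rfl fun x _ => ?_
    rw [ham, Finset.mul_sum]
  have hup : ∑ σ, ∑ x, p σ x * ham (est x) σ ≤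
      ∑ σ, ∑ x, (N * (if N / 32 ≤ ham (est x) σ then p σ x else 0) + N / 32 * p σ x) := by
    refine Finset.sum_le_sum fun σ _ => Finset.sum_le_sum fun x _ => ?_
    have hh : ham (est x) σ ≤ N := by
      calc ham (est x) σ ≤ ∑ i : I, (1 : ℝ) := by
            unfold ham
            refine Finset.sum_le_sum fun i _ => ?_
            split_ifs <;> norm_num
        _ = N := by simp [hN]
    have := hp σ x
    split_ifs with h
    · nlinarith
    · push Not at h; nlinarith
  simp_rw [Finset.sum_add_distrib, ← Finset.mul_sum, hsum, hcard] at hup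
  have h9 := htot.trans hup
  have : N * ((2 : ℝ) ^ Fintype.card I / 32) ≤ N * ∑ σ, ∑ x,
      (if N / 32 ≤ ham (est x) σ then p σ x else 0) := by linarith
  exact le_of_mul_le_mul_left this hN0

lemma aff_prod {Z : Type} [Fintype Z] (n : ℕ) (hn : 1 ≤ n) (w w' : Z → ℝ) (hw : ∀ z, 0 ≤ w z)
    (hw' : ∀ z, 0 ≤ w' z) (h1 : ∑ z, w z = 1) (h1' : ∑ z, w' z = 1)
    (h : 1 - 1 / (2 * (n : ℝ)) ≤ ∑ z, Real.sqrt (w z * w' z)) :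
    1 / 8 ≤ ∑ x : Fin n → Z, min (∏ k, w (x k)) (∏ k, w' (x k)) := by
  have hpow : ∀ f : Z → ℝ, ∑ x : Fin n → Z, ∏ k, f (x k) = (∑ z, f z) ^ n := by
    intro f
    have h2 := (Finset.prod_univ_sum (fun _ : Fin n => (Finset.univ : Finset Z))
      (fun _ z => f z))
    rw [Fintype.piFinset_univ] at h2
    rw [← h2]; simp
  set p : (Fin n → Z) → ℝ := fun x => ∏ k, w (x k) with hp
  set q : (Fin n → Z) → ℝ := fun x => ∏ k, w' (x k) with hq
  have hp0 : ∀ x, 0 ≤ p x := fun x => Finset.prod_nonneg fun k _ => hw _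
  have hq0 : ∀ x, 0 ≤ q x := fun x => Finset.prod_nonneg fun k _ => hw' _
  have hps : ∑ x, p x = 1 := by rw [hp, hpow, h1, one_pow]
  have hqs : ∑ x, q x = 1 := by rw [hq, hpow, h1', one_pow]
  have hn' : (1 : ℝ) ≤ n := by exact_mod_cast hn
  have hA : 1 / 2 ≤ ∑ x, Real.sqrt (p x * q x) := by
    have e : ∀ x, Real.sqrt (p x * q x) = ∏ k, Real.sqrt (w (x k) * w' (x k)) := by
      intro x
      rw [hp, hq]
      simp only
      rw [← Finset.prod_mul_distrib, Real.sqrt_prod]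
      intro k _
      exact mul_nonneg (hw _) (hw' _)
    simp_rw [e]
    rw [hpow (fun z => Real.sqrt (w z * w' z))]
    have hb := one_add_mul_le_pow (a := -(1 / (2 * (n : ℝ)))) (by
      have : 1 / (2 * (n : ℝ)) ≤ 1 := by
        rw [div_le_one (by positivity)]; linarith
      linarith) n
    have e2 : 1 + (n : ℝ) * -(1 / (2 * (n : ℝ))) = 1 / 2 := by field_simp; norm_num
    rw [e2] at hb
    refine hb.trans ?_
    apply pow_le_pow_left₀
    · have : 1 / (2 * (n : ℝ)) ≤ 1 := by
        rw [div_le_one (by positivity)]; linarith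
      linarith
    · linarith
  have hCS := Finset.sum_mul_sq_le_sq_mul_sq Finset.univ (fun x => Real.sqrt (min (p x) (q x)))
    (fun x => Real.sqrt (max (p x) (q x)))
  have e3 : ∀ x, Real.sqrt (min (p x) (q x)) * Real.sqrt (max (p x) (q x)) =
      Real.sqrt (p x * q x) := by
    intro x
    rw [← Real.sqrt_mul (le_min (hp0 x) (hq0 x)), min_mul_max]
  have e4 : ∀ x, Real.sqrt (min (p x) (q x)) ^ 2 = min (p x) (q x) := fun x =>
    Real.sq_sqrt (le_min (hp0 x) (hq0 x))
  have e5 : ∀ x, Real.sqrt (max (p x) (q x)) ^ 2 = max (p x) (q x) := fun x =>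
    Real.sq_sqrt (le_max_of_le_left (hp0 x))
  simp_rw [e3, e4, e5] at hCS
  have hmax : ∑ x, max (p x) (q x) ≤ 2 := by
    calc _ ≤ ∑ x, (p x + q x) := Finset.sum_le_sum fun x _ =>
            max_le (by linarith [hq0 x]) (by linarith [hp0 x])
      _ = 2 := by rw [Finset.sum_add_distrib, hps, hqs]; norm_num
  have hmin0 : 0 ≤ ∑ x, min (p x) (q x) := Finset.sum_nonneg fun x _ => le_min (hp0 x) (hq0 x)
  nlinarith

lemma sqrt_lower (x y : ℝ) (hx : 0 < x) (hy : 0 < y) :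
    (x + y) / 2 - (x - y) ^ 2 / (2 * (x + y)) ≤ Real.sqrt (x * y) := by
  have e : (x + y) / 2 - (x - y) ^ 2 / (2 * (x + y)) = 2 * (x * y) / (x + y) := by
    field_simp; ring
  rw [e]
  apply Real.le_sqrt_of_sq_le
  rw [div_pow, div_le_iff₀ (by positivity)]
  have : 0 < x * y := by positivity
  nlinarith [mul_nonneg this.le (sq_nonneg (x - y))]

abbrev Zt (m : ℕ) := Fin m × Fin m × Bool

def wt {m : ℕ} (a : ℝ) (s : Matrix (Fin m) (Fin m) ℝ) (z : Zt m) : ℝ :=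
  (1 + sg z.2.2 * s z.1 z.2.1 / a) / (2 * (m : ℝ) ^ 2)

lemma sum_Zt {m : ℕ} {M : Type} [AddCommMonoid M] (f : Zt m → M) :
    ∑ z, f z = ∑ u, ∑ v, (f (u, v, true) + f (u, v, false)) := by
  simp [Fintype.sum_prod_type]

lemma wt_sum {m : ℕ} (hm : 1 ≤ m) (a : ℝ) (s : Matrix (Fin m) (Fin m) ℝ) :
    ∑ z, wt a s z = 1 := by
  have hm' : (0 : ℝ) < m := by exact_mod_cast hm
  rw [sum_Zt]
  have : ∀ u v, wt a s (u, v, true) + wt a s (u, v, false) = 1 / (m : ℝ) ^ 2 := by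
    intro u v
    simp only [wt, sg]
    simp
    field_simp
    ring
  simp_rw [this]
  simp
  field_simp

lemma wt_lower {m : ℕ} (hm : 1 ≤ m) (a : ℝ) (ha : 0 < a) (s : Matrix (Fin m) (Fin m) ℝ)
    (hs : ∀ u v, |s u v| ≤ a / 2) (z : Zt m) : 1 / (4 * (m : ℝ) ^ 2) ≤ wt a s z := by
  have hm' : (0 : ℝ) < m := by exact_mod_cast hm
  have h1 : -(1 / 2) ≤ sg z.2.2 * s z.1 z.2.1 / a := by
    have := abs_le.mp (hs z.1 z.2.1)
    rw [le_div_iff₀ ha]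
    cases h : z.2.2 <;> simp [sg] <;> linarith
  have e : 1 / (4 * (m : ℝ) ^ 2) = (1 / 2) / (2 * (m : ℝ) ^ 2) := by field_simp; norm_num
  rw [e, wt]
  gcongr
  linarith

lemma wt_pos {m : ℕ} (hm : 1 ≤ m) (a : ℝ) (ha : 0 < a) (s : Matrix (Fin m) (Fin m) ℝ)
    (hs : ∀ u v, |s u v| ≤ a / 2) (z : Zt m) : 0 < wt a s z := by
  have hm' : (0 : ℝ) < m := by exact_mod_cast hm
  exact lt_of_lt_of_le (by positivity) (wt_lower hm a ha s hs z)

lemma wt_aff {m : ℕ} (hm : 1 ≤ m) (a : ℝ) (ha : 0 < a) (s s' : Matrix (Fin m) (Fin m) ℝ)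
    (hs : ∀ u v, |s u v| ≤ a / 2) (hs' : ∀ u v, |s' u v| ≤ a / 2) :
    1 - hsNormSq (s - s') / (2 * a ^ 2 * (m : ℝ) ^ 2) ≤ ∑ z, Real.sqrt (wt a s z * wt a s' z) := by
  have hm' : (0 : ℝ) < m := by exact_mod_cast hm
  have h1 : ∀ z, (wt a s z + wt a s' z) / 2 - (wt a s z - wt a s' z) ^ 2 * (m : ℝ) ^ 2 ≤
      Real.sqrt (wt a s z * wt a s' z) := by
    intro z
    refine le_trans ?_ (sqrt_lower _ _ (wt_pos hm a ha s hs z) (wt_pos hm a ha s' hs' z))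
    have l1 := wt_lower hm a ha s hs z
    have l2 := wt_lower hm a ha s' hs' z
    have l3 : 1 / (m : ℝ) ^ 2 ≤ 2 * (wt a s z + wt a s' z) := by
      have : 1 / (m : ℝ) ^ 2 = 2 * (1 / (4 * (m : ℝ) ^ 2) + 1 / (4 * (m : ℝ) ^ 2)) := by
        field_simp; norm_num
      rw [this]; linarith
    have l4 : (wt a s z - wt a s' z) ^ 2 / (2 * (wt a s z + wt a s' z)) ≤
        (wt a s z - wt a s' z) ^ 2 / (1 / (m : ℝ) ^ 2) := by gcongr
    rw [div_div_eq_mul_div, div_one] at l4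
    linarith
  refine le_trans (le_of_eq ?_) (Finset.sum_le_sum fun z _ => h1 z)
  rw [Finset.sum_sub_distrib, ← Finset.sum_div, Finset.sum_add_distrib, wt_sum hm, wt_sum hm,
    sum_Zt, hsNormSq, Finset.sum_div]
  congr 1
  · norm_num
  · refine Finset.sum_congr rfl fun u _ => ?_
    rw [Finset.sum_div]
    refine Finset.sum_congr rfl fun v _ => ?_
    simp only [wt, sg, Matrix.sub_apply]
    simp
    field_simp
    ring

def nu {m : ℕ} (a : ℝ) (s : Matrix (Fin m) (Fin m) ℝ) : Measure (Zt m) :=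
  ∑ z, ENNReal.ofReal (wt a s z) • Measure.dirac z

lemma nu_singleton {m : ℕ} (a : ℝ) (s : Matrix (Fin m) (Fin m) ℝ) (z : Zt m) :
    nu a s {z} = ENNReal.ofReal (wt a s z) := by
  classical
  rw [nu, Measure.finset_sum_apply, Finset.sum_eq_single z]
  · simp
  · intro b _ hb
    simp [hb]
  · simp

lemma nu_apply {m : ℕ} (a : ℝ) (s : Matrix (Fin m) (Fin m) ℝ) (A : Finset (Zt m)) :
    nu a s A = ∑ z ∈ A, ENNReal.ofReal (wt a s z) := by
  rw [← sum_measure_singleton]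
  simp_rw [nu_singleton]

def gmap {m : ℕ} (a : ℝ) (z : Zt m) : Obs m := (z.1, z.2.1, sg z.2.2 * a)

def Pm {m : ℕ} (a : ℝ) (s : Matrix (Fin m) (Fin m) ℝ) : Measure (Obs m) := (nu a s).map (gmap a)

lemma gmap_meas {m : ℕ} (a : ℝ) : Measurable (gmap (m := m) a) := measurable_of_countable _

section
variable {m : ℕ} (hm : 1 ≤ m) (a : ℝ) (ha : 0 < a) (s : Matrix (Fin m) (Fin m) ℝ)
    (hs : ∀ u v, |s u v| ≤ a / 2)
include hm ha hs

lemma nu_prob : IsProbabilityMeasure (nu a s) := by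
  constructor
  rw [← Finset.coe_univ, nu_apply, ← ENNReal.ofReal_sum_of_nonneg, wt_sum hm]
  · simp
  · intro z _; exact (wt_pos hm a ha s hs z).le

lemma Pm_prob : IsProbabilityMeasure (Pm a s) := by
  have := nu_prob hm a ha s hs
  exact Measure.isProbabilityMeasure_map (gmap_meas a).aemeasurable

lemma Pm_unif : UniformDesign m (Pm a s) := by
  have hm' : (0 : ℝ) < m := by exact_mod_cast hm
  intro u v
  have hA : MeasurableSet {z : Obs m | z.1 = u ∧ z.2.1 = v} :=
    (measurable_fst (measurableSet_singleton u)).inter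
      (measurable_snd.fst (measurableSet_singleton v))
  rw [Pm, Measure.map_apply (gmap_meas a) hA]
  have : gmap a ⁻¹' {z : Obs m | z.1 = u ∧ z.2.1 = v} =
      (({(u, v, true), (u, v, false)} : Finset (Zt m)) : Set (Zt m)) := by
    ext ⟨x, y, b⟩
    cases b <;> simp [gmap]
  rw [this, nu_apply, Finset.sum_pair (by simp), ← ENNReal.ofReal_add
    (wt_pos hm a ha s hs _).le (wt_pos hm a ha s hs _).le]
  have e : wt a s (u, v, true) + wt a s (u, v, false) = ((m : ℝ) ^ 2)⁻¹ := by
    simp only [wt, sg]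
    simp
    field_simp
    ring
  rw [e, ENNReal.ofReal_inv_of_pos (by positivity), ENNReal.ofReal_pow hm'.le,
    ENNReal.ofReal_natCast]

lemma Pm_bdd : ∀ᵐ z ∂(Pm a s), |z.2.2| ≤ a := by
  rw [Pm, ae_map_iff (gmap_meas a).aemeasurable
    (measurableSet_le (measurable_snd.snd.abs) measurable_const)]
  refine Filter.Eventually.of_forall fun z => ?_
  cases h : z.2.2 <;> simp [gmap, sg, h, abs_of_pos ha]

lemma Pm_reg : regKernel m (Pm a s) = s := by
  have hm' : (0 : ℝ) < m := by exact_mod_cast hm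
  have := nu_prob hm a ha s hs
  ext u v
  have hA : MeasurableSet {z : Obs m | z.1 = u ∧ z.2.1 = v} :=
    (measurable_fst (measurableSet_singleton u)).inter
      (measurable_snd.fst (measurableSet_singleton v))
  have hf : Measurable fun z : Obs m => if z.1 = u ∧ z.2.1 = v then z.2.2 else 0 :=
    Measurable.ite hA measurable_snd.snd measurable_const
  simp only [regKernel, Matrix.of_apply]
  rw [Pm, integral_map (gmap_meas a).aemeasurable hf.aestronglyMeasurable,
    integral_fintype (Integrable.of_finite)]
  have : ∀ z, (nu a s).real {z} = wt a s z := by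
    intro z
    rw [Measure.real, nu_singleton, ENNReal.toReal_ofReal (wt_pos hm a ha s hs _).le]
  simp_rw [this]
  rw [sum_Zt, Finset.sum_eq_single u, Finset.sum_eq_single v]
  · simp [gmap, wt, sg]
    field_simp
    ring
  · intro y _ hy
    simp [gmap, hy]
  · simp
  · intro y _ hy
    simp [gmap, hy]
  · simp

open Classical in
lemma Pm_pi (n : ℕ) (A : Set (Fin n → Obs m)) :
    ENNReal.ofReal (∑ x : Fin n → Zt m, if (fun k => gmap a (x k)) ∈ A then
      ∏ k, wt a s (x k) else 0) ≤ (Measure.pi fun _ : Fin n => Pm a s) A := by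
  have := nu_prob hm a ha s hs
  have e : (Measure.pi fun _ : Fin n => Pm a s) =
      (Measure.pi fun _ : Fin n => nu a s).map (fun x k => gmap a (x k)) := by
    have := Pm_prob hm a ha s hs
    unfold Pm at this ⊢
    rw [Measure.pi_map_pi (fun _ => (gmap_meas a).aemeasurable)]
  rw [e]
  refine le_trans (le_of_eq ?_) (Measure.le_map_apply
    (measurable_of_countable _).aemeasurable A)
  have e2 : (fun (x : Fin n → Zt m) k => gmap a (x k)) ⁻¹' A =
      ((Finset.univ.filter fun x : Fin n → Zt m => (fun k => gmap a (x k)) ∈ A :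
        Finset (Fin n → Zt m)) : Set (Fin n → Zt m)) := by
    ext x; simp
  rw [e2, ← sum_measure_singleton, ← Finset.sum_filter, ENNReal.ofReal_sum_of_nonneg]
  · refine Finset.sum_congr rfl fun x _ => ?_
    rw [Measure.pi_singleton, ENNReal.ofReal_prod_of_nonneg]
    · simp_rw [nu_singleton]
    · intro k _; exact (wt_pos hm a ha s hs _).le
  · intro x _
    exact Finset.prod_nonneg fun k _ => (wt_pos hm a ha s hs _).le

end

lemma bessel {X I : Type} [Fintype X] [DecidableEq I] (f : X → ℝ) (D : I → X → ℝ) (s : Finset I)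
    (q : ℝ) (hq : 0 < q)
    (hD : ∀ i ∈ s, ∀ j ∈ s, ∑ x, D i x * D j x = if i = j then q else 0) :
    ∑ i ∈ s, (∑ x, f x * D i x) ^ 2 ≤ q * ∑ x, f x ^ 2 := by
  set c : I → ℝ := fun i => ∑ x, f x * D i x with hc
  have h0 : 0 ≤ ∑ x, (q * f x - ∑ i ∈ s, c i * D i x) ^ 2 := Finset.sum_nonneg fun x _ => sq_nonneg _
  have e : ∑ x, (q * f x - ∑ i ∈ s, c i * D i x) ^ 2 =
      q ^ 2 * ∑ x, f x ^ 2 - q * ∑ i ∈ s, c i ^ 2 := by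
    have e1 : ∑ x, f x * ∑ i ∈ s, c i * D i x = ∑ i ∈ s, c i ^ 2 := by
      simp_rw [Finset.mul_sum]
      rw [Finset.sum_comm]
      refine Finset.sum_congr rfl fun i _ => ?_
      rw [sq]
      nth_rewrite 3 [hc]
      rw [Finset.mul_sum]
      exact Finset.sum_congr rfl fun x _ => by ring
    have e2 : ∑ x, (∑ i ∈ s, c i * D i x) ^ 2 = q * ∑ i ∈ s, c i ^ 2 := by
      simp_rw [sq, Finset.sum_mul_sum]
      rw [Finset.sum_comm, Finset.mul_sum]
      refine Finset.sum_congr rfl fun i hi => ?_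
      rw [Finset.sum_comm]
      have : ∀ j ∈ s, ∑ x, c i * D i x * (c j * D j x) = c i * c j * if i = j then q else 0 := by
        intro j hj
        rw [← hD i hi j hj, Finset.mul_sum]
        exact Finset.sum_congr rfl fun x _ => by ring
      rw [Finset.sum_congr rfl this]
      simp [hi]
      ring
    have : ∀ x, (q * f x - ∑ i ∈ s, c i * D i x) ^ 2 = q ^ 2 * f x ^ 2
      - 2 * q * (f x * ∑ i ∈ s, c i * D i x) + (∑ i ∈ s, c i * D i x) ^ 2 := fun x => by ring
    simp_rw [this]
    rw [Finset.sum_add_distrib, Finset.sum_sub_distrib, ← Finset.mul_sum, ← Finset.mul_sum, e1, e2]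
    ring
  rw [e] at h0
  have : q * ∑ i ∈ s, c i ^ 2 ≤ q * (q * ∑ x, f x ^ 2) := by linarith
  exact le_of_mul_le_mul_left this hq

def ip {J : Type} [Fintype J] (A B : Matrix J J ℝ) : ℝ := ∑ u, ∑ v, A u v * B u v

lemma ip_sub {J : Type} [Fintype J] (A B C : Matrix J J ℝ) : ip (A - B) C = ip A C - ip B C := by
  simp [ip, sub_mul, Finset.sum_sub_distrib]

lemma hs_ip {m : ℕ} (A : Matrix (Fin m) (Fin m) ℝ) : hsNormSq A = ip A A := by
  simp [hsNormSq, ip, sq]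

lemma bessel_mat {m : ℕ} {I : Type} [Fintype I] [DecidableEq I] (A : Matrix (Fin m) (Fin m) ℝ)
    (D : I → Matrix (Fin m) (Fin m) ℝ) (q : ℝ) (hq : 0 < q)
    (hD : ∀ i j, ip (D i) (D j) = if i = j then q else 0) :
    ∑ i, ip A (D i) ^ 2 ≤ q * hsNormSq A := by
  have := bessel (fun x : Fin m × Fin m => A x.1 x.2) (fun i x => D i x.1 x.2) Finset.univ q hq
    (by intro i _ j _; rw [← hD i j, ip, Fintype.sum_prod_type])
  simp only [Fintype.sum_prod_type] at this
  exact this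

def clip {m : ℕ} (a : ℝ) (S : Matrix (Fin m) (Fin m) ℝ) : Matrix (Fin m) (Fin m) ℝ :=
  Matrix.of fun u v => max (-(a / 2)) (min (a / 2) (S u v))

lemma clip_bd {m : ℕ} (a : ℝ) (ha : 0 < a) (S : Matrix (Fin m) (Fin m) ℝ) (u v) :
    |clip a S u v| ≤ a / 2 := by
  rw [clip, Matrix.of_apply, abs_le]
  exact ⟨le_max_left _ _, max_le (by linarith) (min_le_left _ _)⟩

lemma clip_eq {m : ℕ} (a : ℝ) (S : Matrix (Fin m) (Fin m) ℝ)
    (h : ∀ u v, |S u v| ≤ a / 2) : clip a S = S := by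
  ext u v
  have := abs_le.mp (h u v)
  rw [clip, Matrix.of_apply, min_eq_right this.2, max_eq_right this.1]

lemma clip_lip {m : ℕ} (a : ℝ) (S T : Matrix (Fin m) (Fin m) ℝ) :
    hsNormSq (clip a S - clip a T) ≤ hsNormSq (S - T) := by
  refine Finset.sum_le_sum fun u _ => Finset.sum_le_sum fun v _ => ?_
  apply sq_le_sq.mpr
  simp only [Matrix.sub_apply, clip, Matrix.of_apply]
  refine (abs_max_sub_max_le_max _ _ _ _).trans ?_
  simp only [sub_self, abs_zero]
  apply max_le (abs_nonneg _)
  refine (abs_min_sub_min_le_max _ _ _ _).trans ?_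
  simp

lemma core1 {m n : ℕ} (hm : 1 ≤ m) (hn : 1 ≤ n) (a : ℝ) (ha : 0 < a)
    {I : Type} [Fintype I] [DecidableEq I] [Nonempty I]
    (S : (I → Bool) → Matrix (Fin m) (Fin m) ℝ) (D : I → Matrix (Fin m) (Fin m) ℝ)
    (q β : ℝ) (hq : 0 < q) (hβ : 0 ≤ β)
    (hD : ∀ i j, ip (D i) (D j) = if i = j then q else 0)
    (hSD : ∀ σ i, ip (S σ) (D i) = β * sg (σ i))
    (hflip : ∀ σ i, n * hsNormSq (S σ - S (flipAt σ i)) ≤ a ^ 2 * (m : ℝ) ^ 2)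
    (bad : Finset (I → Bool))
    (hbad : ((bad.card : ℕ) : ℝ) ≤ 2 ^ Fintype.card I / 64)
    (hgood : ∀ σ, σ ∉ bad → ∀ u v, |S σ u v| ≤ a / 2)
    (Shat : (Fin n → Obs m) → Matrix (Fin m) (Fin m) ℝ) :
    ∃ σ, (∀ u v, |S σ u v| ≤ a / 2) ∧
      ENNReal.ofReal (1 / 64) ≤ (Measure.pi fun _ : Fin n => Pm a (S σ))
        {ω | (Fintype.card I : ℝ) * β ^ 2 / (32 * q * (m : ℝ) ^ 2) ≤ l2PiSq (Shat ω - S σ)} := by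
  classical
  have hm' : (0 : ℝ) < m := by exact_mod_cast hm
  have hn' : (0 : ℝ) < n := by exact_mod_cast hn
  set p : (I → Bool) → (Fin n → Zt m) → ℝ := fun σ x => ∏ k, wt a (clip a (S σ)) (x k) with hp
  have hw0 : ∀ σ z, 0 ≤ wt a (clip a (S σ)) z := fun σ z =>
    (wt_pos hm a ha _ (clip_bd a ha _) z).le
  have hp0 : ∀ σ x, 0 ≤ p σ x := fun σ x => Finset.prod_nonneg fun k _ => hw0 _ _
  have hps : ∀ σ, ∑ x, p σ x = 1 := by
    intro σ
    have h2 := (Finset.prod_univ_sum (fun _ : Fin n => (Finset.univ : Finset (Zt m)))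
      (fun _ z => wt a (clip a (S σ)) z))
    rw [Fintype.piFinset_univ] at h2
    rw [hp, ← h2]; simp [wt_sum hm]
  have haff : ∀ σ i, 1 / 8 ≤ ∑ x, min (p σ x) (p (flipAt σ i) x) := by
    intro σ i
    apply aff_prod n hn _ _ (hw0 _) (hw0 _) (wt_sum hm _ _) (wt_sum hm _ _)
    refine le_trans ?_ (wt_aff hm a ha _ _ (clip_bd a ha _) (clip_bd a ha _))
    have h1 := clip_lip a (S σ) (S (flipAt σ i))
    have h2 := hflip σ i
    have h3 : hsNormSq (clip a (S σ) - clip a (S (flipAt σ i))) / (2 * a ^ 2 * (m : ℝ) ^ 2)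
        ≤ 1 / (2 * (n : ℝ)) := by
      rw [div_le_div_iff₀ (by positivity) (by positivity)]
      nlinarith
    linarith
  set est : (Fin n → Zt m) → I → Bool := fun x i =>
    decide (0 ≤ ip (Shat fun k => gmap a (x k)) (D i)) with hest
  have hA := assouad p hp0 hps haff est
  set T : (I → Bool) → ℝ := fun σ => ∑ x,
      if (Fintype.card I : ℝ) / 32 ≤ ham (est x) σ then p σ x else 0 with hT
  have hT1 : ∀ σ, T σ ≤ 1 := by
    intro σ
    rw [← hps σ]
    refine Finset.sum_le_sum fun x _ => ?_
    split_ifs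
    · exact le_rfl
    · exact hp0 σ x
  have hex : ∃ σ, σ ∉ bad ∧ 1 / 64 ≤ T σ := by
    by_contra hcon
    push Not at hcon
    have h1 : ∀ σ, T σ ≤ (if σ ∈ bad then 1 else 0) + 1 / 64 * (if σ ∈ bad then 0 else 1) := by
      intro σ
      split_ifs with h
      · linarith [hT1 σ]
      · linarith [hcon σ h]
    have hcard : (Fintype.card (I → Bool) : ℝ) = 2 ^ Fintype.card I := by simp
    have hpos : (0 : ℝ) < 2 ^ Fintype.card I := by positivity
    have hne : ∃ σ, σ ∉ bad := by
      by_contra hall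
      push Not at hall
      have : bad = Finset.univ := Finset.eq_univ_iff_forall.mpr hall
      rw [this, Finset.card_univ, hcard] at hbad
      linarith
    obtain ⟨σ0, hσ0⟩ := hne
    have h2 : ∑ σ, T σ < ∑ σ, ((if σ ∈ bad then (1 : ℝ) else 0) + 1 / 64) := by
      apply Finset.sum_lt_sum
      · intro σ _
        refine (h1 σ).trans ?_
        split_ifs <;> norm_num
      · refine ⟨σ0, Finset.mem_univ _, ?_⟩
        simp only [hσ0, if_false]
        linarith [hcon σ0 hσ0]
    rw [Finset.sum_add_distrib, Finset.sum_const, Finset.card_univ, nsmul_eq_mul, hcard,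
      Finset.sum_boole] at h2
    simp only [Finset.filter_univ_mem] at h2
    linarith
  obtain ⟨σ, hσ, hTσ⟩ := hex
  have hb := hgood σ hσ
  refine ⟨σ, hb, ?_⟩
  refine le_trans ?_ (Pm_pi hm a ha (S σ) hb n _)
  apply ENNReal.ofReal_le_ofReal
  refine hTσ.trans ?_
  refine Finset.sum_le_sum fun x _ => ?_
  have hpx : p σ x = ∏ k, wt a (S σ) (x k) := by rw [hp]; simp only [clip_eq a (S σ) hb]
  rw [hpx]
  have himp : (Fintype.card I : ℝ) / 32 ≤ ham (est x) σ →
      (fun k => gmap a (x k)) ∈ {ω | (Fintype.card I : ℝ) * β ^ 2 / (32 * q * (m : ℝ) ^ 2)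
        ≤ l2PiSq (Shat ω - S σ)} := by
    intro h
    rw [Set.mem_ofPred_eq]
    set A := Shat (fun k => gmap a (x k)) with hAdef
    have h1 := bessel_mat (A - S σ) D q hq hD
    have h2 : ham (est x) σ * β ^ 2 ≤ ∑ i, ip (A - S σ) (D i) ^ 2 := by
      rw [ham, Finset.sum_mul]
      refine Finset.sum_le_sum fun i _ => ?_
      rw [ip_sub, hSD]
      split_ifs with hne
      · rw [one_mul]
        by_cases h0 : 0 ≤ ip A (D i)
        · have : est x i = true := by simp [hest, ← hAdef, h0]
          rw [this] at hne
          have : σ i = false := by simpa using hne.symm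
          rw [this]
          simp [sg]
          nlinarith
        · have : est x i = false := by simp [hest, ← hAdef]; linarith
          rw [this] at hne
          have : σ i = true := by simpa using hne.symm
          rw [this]
          simp [sg]
          push Not at h0
          nlinarith
      · rw [zero_mul]; positivity
    rw [l2PiSq, div_le_div_iff₀ (by positivity) (by positivity)]
    have h3 : (Fintype.card I : ℝ) / 32 * β ^ 2 ≤ q * hsNormSq (A - S σ) := by
      refine le_trans ?_ (h2.trans h1)
      gcongr
    have h4 : (m : ℝ) ^ 2 * ((Fintype.card I : ℝ) / 32 * β ^ 2) ≤
      (m : ℝ) ^ 2 * (q * hsNormSq (A - S σ)) := by gcongr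
    linarith
  by_cases h : (Fintype.card I : ℝ) / 32 ≤ ham (est x) σ
  · rw [if_pos h, if_pos (himp h)]
  · rw [if_neg h]
    split_ifs
    · exact Finset.prod_nonneg fun k _ => (wt_pos hm a ha _ hb _).le
    · exact le_rfl

def lift {m : ℕ} {J : Type} [Fintype J] (φ : ℕ → Fin m → ℝ) (ι : J → ℕ) (M : Matrix J J ℝ) :
    Matrix (Fin m) (Fin m) ℝ :=
  (Matrix.of fun (u : Fin m) (j : J) => φ (ι j) u) * M *
    (Matrix.of fun (u : Fin m) (j : J) => φ (ι j) u).transpose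

lemma ip_trace {J : Type} [Fintype J] (A B : Matrix J J ℝ) : ip A B = (A.transpose * B).trace := by
  simp only [ip, Matrix.trace, Matrix.diag, Matrix.mul_apply, Matrix.transpose_apply]
  rw [Finset.sum_comm]

section
variable {m : ℕ} {J : Type} [Fintype J] [DecidableEq J] (φ : ℕ → Fin m → ℝ)
  (ι : J → ℕ)

lemma lift_apply (M : Matrix J J ℝ) (u v : Fin m) :
    lift φ ι M u v = ∑ j, ∑ k, φ (ι j) u * M j k * φ (ι k) v := by
  simp only [lift, Matrix.mul_apply, Matrix.of_apply, Matrix.transpose_apply, Finset.sum_mul]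
  rw [Finset.sum_comm]

lemma lift_sub (M N : Matrix J J ℝ) : lift φ ι M - lift φ ι N = lift φ ι (M - N) := by
  simp [lift, Matrix.mul_sub, Matrix.sub_mul]

lemma lift_symm (M : Matrix J J ℝ) (h : M.IsSymm) : (lift φ ι M).IsSymm := by
  rw [Matrix.IsSymm, lift, Matrix.transpose_mul, Matrix.transpose_mul, h.eq, Matrix.mul_assoc,
    Matrix.transpose_transpose]

lemma lift_rank (M : Matrix J J ℝ) : (lift φ ι M).rank ≤ M.rank :=
  (Matrix.rank_mul_le_left _ _).trans (Matrix.rank_mul_le_right _ _)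

variable (ho : OrthonormalFamily m φ) (hι : Function.Injective ι) (hι1 : ∀ j, ι j ∈ Finset.Icc 1 m)
include ho hι hι1

lemma lift_ip (A B : Matrix J J ℝ) : ip (lift φ ι A) (lift φ ι B) = ip A B := by
  set U : Matrix (Fin m) J ℝ := Matrix.of fun (u : Fin m) (j : J) => φ (ι j) u with hU
  have hUU : U.transpose * U = 1 := by
    ext i j
    rw [Matrix.mul_apply, Matrix.one_apply]
    simp only [hU, Matrix.transpose_apply, Matrix.of_apply]
    rw [ho _ (hι1 i) _ (hι1 j)]
    simp [hι.eq_iff]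
  rw [ip_trace, ip_trace, lift, lift, Matrix.transpose_mul, Matrix.transpose_mul,
    Matrix.transpose_transpose]
  have : U * (A.transpose * U.transpose) * (U * B * U.transpose) =
      U * (A.transpose * (U.transpose * U) * B * U.transpose) := by
    simp only [Matrix.mul_assoc]
  rw [this, hUU, Matrix.mul_one, Matrix.trace_mul_comm, Matrix.mul_assoc, hUU, Matrix.mul_one]

lemma lift_sob (c : ℝ) (lam : ℕ → ℝ) (k0 l : ℕ) (hE : IsEigenData m c lam φ k0) (hl : l ≤ m)
    (hl1 : 1 ≤ l) (hιl : ∀ j, ι j ≤ l) (M : Matrix J J ℝ) :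
    sobolevHSSq lam φ (lift φ ι M) ≤ lam l * ip M M := by
  have hlam0 : 0 ≤ lam l := hE.nonneg l (Finset.mem_Icc.mpr ⟨hl1, hl⟩)
  have hz : ∀ k ∈ Finset.Icc 1 m, l < k → (lift φ ι M).mulVec (φ k) = 0 := by
    intro k hk hlk
    rw [lift, ← Matrix.mulVec_mulVec]
    have : (Matrix.of fun (u : Fin m) (j : J) => φ (ι j) u).transpose.mulVec (φ k) = 0 := by
      ext j
      simp only [Matrix.mulVec, dotProduct, Matrix.transpose_apply, Matrix.of_apply]
      rw [ho _ (hι1 j) _ hk, if_neg]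
      · rfl
      · have := hιl j; omega
    rw [this, Matrix.mulVec_zero]
  have h1 : sobolevHSSq lam φ (lift φ ι M) ≤
      lam l * ∑ k ∈ Finset.Icc 1 m, ∑ u, ((lift φ ι M).mulVec (φ k) u) ^ 2 := by
    rw [sobolevHSSq, Finset.mul_sum]
    refine Finset.sum_le_sum fun k hk => ?_
    by_cases hlk : l < k
    · rw [hz k hk hlk]; simp
    · have := hE.mono k l (Finset.mem_Icc.mp hk).1 (by omega) hl
      gcongr
  refine h1.trans ?_
  gcongr
  rw [← lift_ip φ ι ho hι hι1, Finset.sum_comm, ip]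
  refine Finset.sum_le_sum fun u _ => ?_
  have := bessel (lift φ ι M u) φ (Finset.Icc 1 m) 1 one_pos (by
    intro i hi j hj
    rw [ho i hi j hj])
  rw [one_mul] at this
  simpa only [Matrix.mulVec, dotProduct, sq] using this

end

lemma core2 {m n r l k0 : ℕ} (hm : 1 ≤ m) (hn : 1 ≤ n) (c ρ a : ℝ) (ha : 0 < a) (lam : ℕ → ℝ)
    (φ : ℕ → Fin m → ℝ) (hE : IsEigenData m c lam φ k0) (hl : l ≤ m) (hl1 : 1 ≤ l)
    {I J : Type} [Fintype I] [DecidableEq I] [Nonempty I] [Fintype J] [DecidableEq J]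
    (ι : J → ℕ) (hι : Function.Injective ι) (hιl : ∀ j, 1 ≤ ι j ∧ ι j ≤ l)
    (M : (I → Bool) → Matrix J J ℝ) (D : I → Matrix J J ℝ)
    (q β : ℝ) (hq : 0 < q) (hβ : 0 ≤ β)
    (hD : ∀ i j, ip (D i) (D j) = if i = j then q else 0)
    (hMD : ∀ σ i, ip (M σ) (D i) = β * sg (σ i))
    (hflip : ∀ σ i, n * ip (M σ - M (flipAt σ i)) (M σ - M (flipAt σ i)) ≤ a ^ 2 * (m : ℝ) ^ 2)
    (bad : Finset (I → Bool))
    (hbad : ((bad.card : ℕ) : ℝ) ≤ 2 ^ Fintype.card I / 64)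
    (hgood : ∀ σ, σ ∉ bad → ∀ u v, |∑ j, ∑ k, φ (ι j) u * M σ j k * φ (ι k) v| ≤ a / 2)
    (hsymm : ∀ σ, (M σ).IsSymm) (hrank : ∀ σ, (M σ).rank ≤ r)
    (hsob : ∀ σ, lam l * ip (M σ) (M σ) ≤ ρ ^ 2 * (m : ℝ) ^ 2)
    (Shat : (Fin n → Obs m) → Matrix (Fin m) (Fin m) ℝ) (e : ℝ≥0∞)
    (he : e ≤ ENNReal.ofReal ((Fintype.card I : ℝ) * β ^ 2 / (32 * q * (m : ℝ) ^ 2))) :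
    ENNReal.ofReal (1 / 64) ≤
            ⨆ (P : Measure (Obs m)) (_ : MemP m r ρ a lam φ P),
              (Measure.pi fun _ : Fin n => P)
                {ω | e ≤ ENNReal.ofReal (l2PiSq (Shat ω - regKernel m P))} := by
  have hι1 : ∀ j, ι j ∈ Finset.Icc 1 m := fun j =>
    Finset.mem_Icc.mpr ⟨(hιl j).1, (hιl j).2.trans hl⟩
  obtain ⟨σ, hb, hσ⟩ := core1 hm hn a ha (fun σ => lift φ ι (M σ)) (fun i => lift φ ι (D i)) q β hq hβ
    (fun i j => by rw [lift_ip φ ι hE.orth hι hι1, hD])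
    (fun σ i => by rw [lift_ip φ ι hE.orth hι hι1, hMD])
    (fun σ i => by
      rw [lift_sub, hs_ip, lift_ip φ ι hE.orth hι hι1]; exact hflip σ i)
    bad hbad (fun σ h u v => by
      rw [lift_apply]; exact hgood σ h u v) Shat
  have hreg := Pm_reg hm a ha _ hb
  have hmem : MemP m r ρ a lam φ (Pm a (lift φ ι (M σ))) := by
    refine ⟨Pm_prob hm a ha _ hb, Pm_unif hm a ha _ hb, Pm_bdd hm a ha _ hb, ?_, ?_, ?_⟩
    · rw [hreg]; exact lift_symm φ ι _ (hsymm σ)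
    · rw [hreg]; exact (lift_rank φ ι _).trans (hrank σ)
    · rw [hreg]
      exact (lift_sob φ ι hE.orth hι hι1 c lam k0 l hE hl hl1 (fun j => (hιl j).2) _).trans (hsob σ)
  refine le_trans ?_ (le_iSup₂ (f := fun (P : Measure (Obs m)) (_ : MemP m r ρ a lam φ P) =>
      (Measure.pi fun _ : Fin n => P)
        {ω | e ≤ ENNReal.ofReal (l2PiSq (Shat ω - regKernel m P))}) _ hmem)
  refine hσ.trans (measure_mono ?_)
  intro ω hω
  simp only [Set.mem_ofPred_eq, hreg] at hω ⊢
  exact he.trans (ENNReal.ofReal_le_ofReal hω)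

lemma hoef_bad {I K : Type} [Fintype I] [DecidableEq I] [Fintype K] (c : K → I → ℝ) (v : ℝ)
    (m : ℕ) (hm : 2 ≤ Real.log m) (hK : Fintype.card K ≤ m ^ 2) (hv : 0 < v)
    (hc : ∀ k, ∑ i, c k i ^ 2 ≤ v) :
    ∃ bad : Finset (I → Bool), ((bad.card : ℕ) : ℝ) ≤ 2 ^ Fintype.card I / 64 ∧
      ∀ σ, σ ∉ bad → ∀ k, (∑ i, sg (σ i) * c k i) ^ 2 ≤ 16 * v * Real.log m := by
  classical
  refine ⟨_, hoef_union c v m hm hK hv hc, ?_⟩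
  intro σ hσ k
  by_contra hcon
  push Not at hcon
  exact hσ (Finset.mem_filter.mpr ⟨Finset.mem_univ _, k, hcon⟩)

lemma exists_idx (J : Type) [Fintype J] (l : ℕ) (h : Fintype.card J ≤ l) :
    ∃ ι : J → ℕ, Function.Injective ι ∧ ∀ j, 1 ≤ ι j ∧ ι j ≤ l := by
  refine ⟨fun j => (Fintype.equivFin J j : ℕ) + 1, ?_, ?_⟩
  · intro i j hij
    have : (Fintype.equivFin J i : ℕ) = Fintype.equivFin J j := by simpa using hij
    exact (Fintype.equivFin J).injective (Fin.ext this)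
  · intro j
    have := (Fintype.equivFin J j).2
    simp only
    omega

section
variable {m : ℕ} (φ : ℕ → Fin m → ℝ) (ho : OrthonormalFamily m φ)
include ho

lemma row_sq (u : Fin m) : ∑ k ∈ Finset.Icc 1 m, φ k u ^ 2 ≤ 1 := by
  have := bessel (fun v : Fin m => if v = u then (1 : ℝ) else 0) φ (Finset.Icc 1 m) 1 one_pos (by
    intro i hi j hj
    rw [ho i hi j hj])
  simpa using this

lemma row_sq_idx {J : Type} [Fintype J] (ι : J → ℕ) (hι : Function.Injective ι)
    (hι1 : ∀ j, ι j ∈ Finset.Icc 1 m) (u : Fin m) : ∑ j, φ (ι j) u ^ 2 ≤ 1 := by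
  classical
  refine le_trans ?_ (row_sq φ ho u)
  have e : ∑ j, φ (ι j) u ^ 2 = ∑ k ∈ Finset.univ.image ι, φ k u ^ 2 := by
    rw [Finset.sum_image (fun i _ j _ h => hι h)]
  rw [e]
  apply Finset.sum_le_sum_of_subset_of_nonneg
  · intro k hk
    obtain ⟨j, _, rfl⟩ := Finset.mem_image.mp hk
    exact hι1 j
  · intros; positivity

lemma sparsity_pos (hm : 1 ≤ m) : 1 ≤ sparsity m φ := by
  have h1 : (1 : ℕ) ∈ Finset.Icc 1 m := Finset.mem_Icc.mpr ⟨le_rfl, hm⟩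
  have h := ho 1 h1 1 h1
  rw [if_pos rfl] at h
  have : ∃ u, φ 1 u ≠ 0 := by
    by_contra hc
    push Not at hc
    simp [hc] at h
  obtain ⟨u, hu⟩ := this
  have h2 : ((Finset.Icc 1 m).filter fun j => φ j u ≠ 0).card ≤ sparsity m φ :=
    Finset.le_sup (f := fun v : Fin m => ((Finset.Icc 1 m).filter fun j => φ j v ≠ 0).card)
      (Finset.mem_univ u)
  refine le_trans ?_ h2
  exact Finset.card_pos.mpr ⟨1, Finset.mem_filter.mpr ⟨h1, hu⟩⟩

end

lemma cs_sparse {m : ℕ} (φ : ℕ → Fin m → ℝ) {J : Type} [Fintype J] (ι : J → ℕ)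
    (hι : Function.Injective ι) (hι1 : ∀ j, ι j ∈ Finset.Icc 1 m) (u : Fin m) (τ : J → ℝ)
    (hτ : ∀ j, τ j ^ 2 = 1) :
    (∑ j, τ j * φ (ι j) u) ^ 2 ≤ (sparsity m φ : ℝ) * ∑ j, φ (ι j) u ^ 2 := by
  classical
  have h2 : ((Finset.Icc 1 m).filter fun j => φ j u ≠ 0).card ≤ sparsity m φ :=
    Finset.le_sup (f := fun v : Fin m => ((Finset.Icc 1 m).filter fun j => φ j v ≠ 0).card)
      (Finset.mem_univ u)
  set F : Finset J := Finset.univ.filter fun j => φ (ι j) u ≠ 0 with hF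
  have h3 : F.card ≤ sparsity m φ := by
    refine le_trans ?_ h2
    rw [← Finset.card_image_of_injective F hι]
    apply Finset.card_le_card
    intro k hk
    obtain ⟨j, hj, rfl⟩ := Finset.mem_image.mp hk
    rw [hF, Finset.mem_filter] at hj
    exact Finset.mem_filter.mpr ⟨hι1 j, hj.2⟩
  have e1 : ∑ j, τ j * φ (ι j) u = ∑ j ∈ F, τ j * φ (ι j) u := by
    symm
    apply Finset.sum_subset (Finset.subset_univ _)
    intro j _ hj
    have : φ (ι j) u = 0 := by simpa [hF] using hj
    rw [this, mul_zero]
  rw [e1]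
  refine sq_sum_le_card_mul_sum_sq.trans ?_
  have h4 : (F.card : ℝ) ≤ sparsity m φ := by exact_mod_cast h3
  have h5 : ∑ j ∈ F, (τ j * φ (ι j) u) ^ 2 ≤ ∑ j, φ (ι j) u ^ 2 := by
    simp_rw [mul_pow, hτ, one_mul]
    exact Finset.sum_le_sum_of_subset_of_nonneg (Finset.subset_univ _) (by intros; positivity)
  gcongr

lemma sg_sq' (b : Bool) : sg b ^ 2 = 1 := by rw [sq, sg_sq]

lemma case1 {m n r k0 : ℕ} (hm : 1 ≤ m) (hn : 1 ≤ n) (hr : 1 ≤ r) (c ρ a : ℝ) (ha : 0 < a)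
    (hlog : 2 ≤ Real.log m) (lam : ℕ → ℝ)
    (φ : ℕ → Fin m → ℝ) (hE : IsEigenData m c lam φ k0) (κ : ℝ) (hκ : 0 ≤ κ)
    (A1 : n * (256 * κ ^ 2) ≤ a ^ 2 * (m : ℝ) ^ 2)
    (A2 : lam 1 * κ ^ 2 ≤ ρ ^ 2 * (m : ℝ) ^ 2)
    (A3 : 256 * κ ^ 2 * (sparsity m φ * Real.log m) ≤ a ^ 2)
    (Shat : (Fin n → Obs m) → Matrix (Fin m) (Fin m) ℝ) (e : ℝ≥0∞)
    (he : e ≤ ENNReal.ofReal (κ ^ 2 / (576 * (m : ℝ) ^ 2))) :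
    ENNReal.ofReal (1 / 64) ≤
            ⨆ (P : Measure (Obs m)) (_ : MemP m r ρ a lam φ P),
              (Measure.pi fun _ : Fin n => P)
                {ω | e ≤ ENNReal.ofReal (l2PiSq (Shat ω - regKernel m P))} := by
  have hm' : (0 : ℝ) < m := by exact_mod_cast hm
  have hd : (1 : ℝ) ≤ sparsity m φ := by exact_mod_cast sparsity_pos φ hE.orth hm
  obtain ⟨ι, hι, hιl⟩ := exists_idx Unit 1 (by simp)
  have hι1 : ∀ j, ι j ∈ Finset.Icc 1 m := fun j =>
    Finset.mem_Icc.mpr ⟨(hιl j).1, (hιl j).2.trans hm⟩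
  have hx : ∀ u, φ (ι ()) u ^ 2 ≤ 1 := by
    intro u
    simpa using row_sq_idx φ hE.orth ι hι hι1 u
  refine core2 hm hn c ρ a ha lam φ hE hm le_rfl (I := Unit) ι hι hιl
    (fun σ => Matrix.of fun _ _ => κ * sg (σ ())) (fun _ => Matrix.of fun _ _ => 1) 1 κ one_pos hκ
    ?_ ?_ ?_ ∅ ?_ ?_ ?_ ?_ ?_ Shat e ?_
  · intro i j; simp [ip]
  · intro σ i; simp [ip]
  · intro σ i
    have : (sg (σ ()) - sg (flipAt σ i ())) ^ 2 = 4 := by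
      have : flipAt σ i () = !σ () := by simp [flipAt]
      rw [this]
      cases σ () <;> norm_num [sg]
    simp [ip]
    have e1 : (κ * sg (σ ()) - κ * sg (flipAt σ i ())) * (κ * sg (σ ()) - κ * sg (flipAt σ i ()))
      = 4 * κ ^ 2 := by rw [← this]; ring
    rw [e1]
    have : 0 ≤ n * κ ^ 2 := by positivity
    linarith
  · simp; norm_num
  · intro σ _ u v
    simp only [Finset.univ_unique, Finset.sum_singleton, Matrix.of_apply]
    have h1 := hx u
    have h2 := hx v
    apply abs_le_of_sq_le_sq _ (by positivity)
    have e1 : (φ (ι ()) u * (κ * sg (σ ())) * φ (ι ()) v) ^ 2 =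
      κ ^ 2 * (φ (ι ()) u ^ 2 * φ (ι ()) v ^ 2) := by
      rw [mul_pow, mul_pow, mul_pow, sg_sq']; ring
    rw [e1]
    have h3 : φ (ι ()) u ^ 2 * φ (ι ()) v ^ 2 ≤ 1 := by
      calc _ ≤ (1 : ℝ) * 1 := by gcongr
        _ = 1 := by norm_num
    have h4 : 1 ≤ (sparsity m φ * Real.log m) := by nlinarith
    have h5 : κ ^ 2 * (φ (ι ()) u ^ 2 * φ (ι ()) v ^ 2) ≤ κ ^ 2 * 1 := by gcongr
    have h6 : 256 * κ ^ 2 * 1 ≤ 256 * κ ^ 2 * (sparsity m φ * Real.log m) := by gcongr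
    nlinarith
  · intro σ; ext; rfl
  · intro σ
    refine (Matrix.rank_le_card_width _).trans ?_
    simpa using hr
  · intro σ
    simp [ip]
    have : κ * sg (σ ()) * (κ * sg (σ ())) = κ ^ 2 := by
      calc _ = κ ^ 2 * sg (σ ()) ^ 2 := by ring
        _ = _ := by rw [sg_sq', mul_one]
    rw [this]; exact A2
  · refine he.trans (ENNReal.ofReal_le_ofReal ?_)
    simp
    gcongr
    norm_num

lemma case2 {m n r l k0 h : ℕ} (hm : 1 ≤ m) (hn : 1 ≤ n) (hr : 1 ≤ r) (c ρ a : ℝ) (ha : 0 < a)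
    (hlog : 2 ≤ Real.log m) (lam : ℕ → ℝ) (hlm : l ≤ m)
    (φ : ℕ → Fin m → ℝ) (hE : IsEigenData m c lam φ k0) (κ : ℝ) (hκ : 0 ≤ κ)
    (hh : 1 ≤ h) (hh2 : 2 * h ≤ l) (hh3 : l ≤ 3 * h)
    (A1 : n * (256 * κ ^ 2 * l) ≤ a ^ 2 * (m : ℝ) ^ 2)
    (A2 : lam l * (κ ^ 2 * (l : ℝ) ^ 2) ≤ ρ ^ 2 * (m : ℝ) ^ 2)
    (A3 : 256 * κ ^ 2 * (sparsity m φ * Real.log m) ≤ a ^ 2)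
    (Shat : (Fin n → Obs m) → Matrix (Fin m) (Fin m) ℝ) (e : ℝ≥0∞)
    (he : e ≤ ENNReal.ofReal (κ ^ 2 * (l : ℝ) ^ 2 / (576 * (m : ℝ) ^ 2))) :
    ENNReal.ofReal (1 / 64) ≤
            ⨆ (P : Measure (Obs m)) (_ : MemP m r ρ a lam φ P),
              (Measure.pi fun _ : Fin n => P)
                {ω | e ≤ ENNReal.ofReal (l2PiSq (Shat ω - regKernel m P))} := by
  have hm' : (0 : ℝ) < m := by exact_mod_cast hm
  have hl1 : 1 ≤ l := by omega
  have hh' : (1 : ℝ) ≤ h := by exact_mod_cast hh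
  have hh2' : 2 * (h : ℝ) ≤ l := by exact_mod_cast hh2
  have hh3' : (l : ℝ) ≤ 3 * h := by exact_mod_cast hh3
  have hd : (1 : ℝ) ≤ sparsity m φ := by exact_mod_cast sparsity_pos φ hE.orth hm
  obtain ⟨ι, hι, hιl⟩ := exists_idx (Fin h ⊕ Fin h) l (by simp; omega)
  have hι1 : ∀ j, ι j ∈ Finset.Icc 1 m := fun j =>
    Finset.mem_Icc.mpr ⟨(hιl j).1, (hιl j).2.trans hlm⟩
  have hcard : Fintype.card (Fin m) ≤ m ^ 2 := by
    simp; exact Nat.le_self_pow (by norm_num) m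
  have hinl : ∀ u, ∑ j : Fin h, φ (ι (Sum.inl j)) u ^ 2 ≤ 1 := fun u =>
    row_sq_idx φ hE.orth (fun j => ι (Sum.inl j)) (hι.comp Sum.inl_injective) (fun j => hι1 _) u
  have hinr : ∀ u, ∑ j : Fin h, φ (ι (Sum.inr j)) u ^ 2 ≤ 1 := fun u =>
    row_sq_idx φ hE.orth (fun j => ι (Sum.inr j)) (hι.comp Sum.inr_injective) (fun j => hι1 _) u
  obtain ⟨bad1, hb1, hg1⟩ := hoef_bad (fun (u : Fin m) (j : Fin h) => φ (ι (Sum.inl j)) u) 1 m hlog hcard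
    one_pos hinl
  obtain ⟨bad2, hb2, hg2⟩ := hoef_bad (fun (u : Fin m) (j : Fin h) => φ (ι (Sum.inr j)) u) 1 m hlog hcard
    one_pos hinr
  have ht : ∃ t : Fin h → Bool, ∀ u,
      (∑ i, sg (t i) * φ (ι (Sum.inr i)) u) ^ 2 ≤ 16 * 1 * Real.log m := by
    by_contra hcon
    push Not at hcon
    have hall : bad2 = Finset.univ := by
      rw [Finset.eq_univ_iff_forall]
      intro σ
      by_contra hσ
      obtain ⟨u, hu⟩ := hcon σ
      have := hg2 σ hσ u
      linarith
    rw [hall] at hb2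
    simp at hb2
    have : (0 : ℝ) < 2 ^ h := by positivity
    linarith
  obtain ⟨t, ht⟩ := ht
  set τ : (Fin h → Bool) → Fin h ⊕ Fin h → ℝ := fun σ =>
    Sum.elim (fun i => sg (σ i)) (fun i => sg (t i)) with hτ
  have hτ2 : ∀ σ j, τ σ j ^ 2 = 1 := by
    intro σ j
    rcases j with j | j <;> simp [hτ, sg_sq']
  have hτs : ∀ σ, ∑ j, τ σ j ^ 2 = 2 * h := by
    intro σ; simp only [hτ2]; simp; ring
  have : Nonempty (Fin h) := ⟨⟨0, hh⟩⟩
  refine core2 hm hn c ρ a ha lam φ hE hlm hl1 (I := Fin h) ι hι hιl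
    (fun σ => Matrix.of fun j k => κ * (τ σ j * τ σ k))
    (fun i => Matrix.of fun j k => Sum.elim (fun i' => if i' = i then (1 : ℝ) else 0) (fun _ => 0) j
      * Sum.elim (fun _ => (0 : ℝ)) (fun k => sg (t k)) k)
    h (κ * h) (by linarith) (by positivity)
    ?_ ?_ ?_ bad1 hb1 ?_ ?_ ?_ ?_ Shat e ?_
  · intro i j
    simp only [ip, Matrix.of_apply, Fintype.sum_sum_type, Sum.elim_inl, Sum.elim_inr]
    simp [sg_sq]
    congr 1
    exact propext eq_comm
  · intro σ i
    simp only [ip, Matrix.of_apply, Fintype.sum_sum_type, Sum.elim_inl, Sum.elim_inr, hτ]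
    simp
    have : ∀ x, κ * (sg (σ i) * sg (t x)) * sg (t x) = κ * sg (σ i) := by
      intro x
      calc _ = κ * sg (σ i) * sg (t x) ^ 2 := by ring
        _ = _ := by rw [sg_sq', mul_one]
    simp [this]
    ring
  · intro σ i
    have hdiff : ∑ j, (τ σ j - τ (flipAt σ i) j) ^ 2 = 4 := by
      rw [Fintype.sum_sum_type]
      simp only [hτ, Sum.elim_inl, Sum.elim_inr]
      rw [Finset.sum_eq_single i]
      · simp [flipAt]
        cases σ i <;> norm_num [sg]
      · intro j _ hj
        simp [flipAt, hj]
      · simp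
    have hle : ip ((Matrix.of fun j k => κ * (τ σ j * τ σ k)) -
        (Matrix.of fun j k => κ * (τ (flipAt σ i) j * τ (flipAt σ i) k)))
        ((Matrix.of fun j k => κ * (τ σ j * τ σ k)) -
        (Matrix.of fun j k => κ * (τ (flipAt σ i) j * τ (flipAt σ i) k)))
        ≤ ∑ j, ∑ k, (2 * κ ^ 2 * ((τ σ j - τ (flipAt σ i) j) ^ 2 * τ σ k ^ 2) +
          2 * κ ^ 2 * (τ (flipAt σ i) j ^ 2 * (τ σ k - τ (flipAt σ i) k) ^ 2)) := by
      unfold ip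
      refine Finset.sum_le_sum fun j _ => Finset.sum_le_sum fun k _ => ?_
      simp only [Matrix.sub_apply, Matrix.of_apply]
      have : ∀ x y z w : ℝ, (κ * (x * y) - κ * (z * w)) * (κ * (x * y) - κ * (z * w)) ≤
          2 * κ ^ 2 * ((x - z) ^ 2 * y ^ 2) + 2 * κ ^ 2 * (z ^ 2 * (y - w) ^ 2) := by
        intro x y z w
        have e : 2 * κ ^ 2 * ((x - z) ^ 2 * y ^ 2) + 2 * κ ^ 2 * (z ^ 2 * (y - w) ^ 2) -
          (κ * (x * y) - κ * (z * w)) * (κ * (x * y) - κ * (z * w)) =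
          (κ * ((x - z) * y - z * (y - w))) ^ 2 := by ring
        nlinarith [sq_nonneg (κ * ((x - z) * y - z * (y - w)))]
      exact this _ _ _ _
    have hval : ∑ j, ∑ k, (2 * κ ^ 2 * ((τ σ j - τ (flipAt σ i) j) ^ 2 * τ σ k ^ 2) +
          2 * κ ^ 2 * (τ (flipAt σ i) j ^ 2 * (τ σ k - τ (flipAt σ i) k) ^ 2)) =
          32 * κ ^ 2 * h := by
      simp_rw [Finset.sum_add_distrib, ← Finset.mul_sum, ← Finset.sum_mul, hdiff, hτs]
      ring
    rw [hval] at hle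
    have h0 : (0 : ℝ) ≤ n * κ ^ 2 := by positivity
    calc _ ≤ n * (32 * κ ^ 2 * h) := by gcongr
      _ ≤ n * (256 * κ ^ 2 * l) := by nlinarith
      _ ≤ _ := A1
  · intro σ hσ u v
    have hσ' : ∀ u, (∑ i, sg (σ i) * φ (ι (Sum.inl i)) u) ^ 2 ≤ 16 * 1 * Real.log m := by
      exact hg1 σ hσ
    set ψ : Fin m → ℝ := fun u => ∑ j, τ σ j * φ (ι j) u with hψ
    have e1 : ∑ j, ∑ k, φ (ι j) u * (Matrix.of fun j k => κ * (τ σ j * τ σ k)) j k * φ (ι k) v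
        = κ * (ψ u * ψ v) := by
      rw [hψ, Finset.sum_mul_sum, Finset.mul_sum]
      refine Finset.sum_congr rfl fun j _ => ?_
      rw [Finset.mul_sum]
      refine Finset.sum_congr rfl fun k _ => ?_
      rw [Matrix.of_apply]; ring
    rw [e1]
    have h1 : ψ u ^ 2 ≤ sparsity m φ := by
      refine (cs_sparse φ ι hι hι1 u (τ σ) (hτ2 σ)).trans ?_
      have := row_sq_idx φ hE.orth ι hι hι1 u
      nlinarith
    have h2 : ψ v ^ 2 ≤ 64 * Real.log m := by
      have e2 : ψ v = (∑ i, sg (σ i) * φ (ι (Sum.inl i)) v) + ∑ i, sg (t i) * φ (ι (Sum.inr i)) v := by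
        rw [hψ]; simp only [Fintype.sum_sum_type, hτ, Sum.elim_inl, Sum.elim_inr]
      rw [e2]
      have := hσ' v
      have := ht v
      nlinarith [sq_nonneg ((∑ i, sg (σ i) * φ (ι (Sum.inl i)) v) -
        ∑ i, sg (t i) * φ (ι (Sum.inr i)) v)]
    apply abs_le_of_sq_le_sq _ (by positivity)
    have h3 : ψ u ^ 2 * ψ v ^ 2 ≤ sparsity m φ * (64 * Real.log m) := by gcongr
    calc _ = κ ^ 2 * (ψ u ^ 2 * ψ v ^ 2) := by ring
      _ ≤ κ ^ 2 * (sparsity m φ * (64 * Real.log m)) := by gcongr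
      _ ≤ _ := by nlinarith
  · intro σ; ext j k; simp [Matrix.transpose_apply]; rw [mul_comm (τ σ k)]; simp
  · intro σ
    refine le_trans ?_ hr
    have : (Matrix.of fun j k => κ * (τ σ j * τ σ k)) =
      Matrix.vecMulVec (fun j => κ * τ σ j) (τ σ) := by
      ext j k; simp [Matrix.vecMulVec_apply]; ring
    rw [this]
    exact Matrix.rank_vecMulVec_le _ _
  · intro σ
    have : ip (Matrix.of fun j k => κ * (τ σ j * τ σ k)) (Matrix.of fun j k => κ * (τ σ j * τ σ k))
        = κ ^ 2 * (2 * h) ^ 2 := by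
      have e1 : ∀ j k, κ * (τ σ j * τ σ k) * (κ * (τ σ j * τ σ k)) = κ ^ 2 * (τ σ j ^ 2 * τ σ k ^ 2) :=
        fun j k => by ring
      simp only [ip, Matrix.of_apply, e1, ← Finset.mul_sum, ← Finset.sum_mul, hτs]
      ring
    rw [this]
    refine le_trans ?_ A2
    have := hE.nonneg l (Finset.mem_Icc.mpr ⟨hl1, hlm⟩)
    gcongr
  · refine he.trans (ENNReal.ofReal_le_ofReal ?_)
    rw [Fintype.card_fin, div_le_div_iff₀ (by positivity) (by positivity)]
    have h9 : (l : ℝ) ^ 2 ≤ 9 * h ^ 2 := by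
      calc (l : ℝ) ^ 2 ≤ (3 * h) ^ 2 := by gcongr
        _ = _ := by ring
    have h10 : 0 ≤ 32 * κ ^ 2 * h * (m : ℝ) ^ 2 := by positivity
    have h11 := mul_le_mul_of_nonneg_left h9 h10
    have h12 : 0 ≤ κ ^ 2 * h * (m : ℝ) ^ 2 * h ^ 2 := by positivity
    linarith

def Bm {h p b : ℕ} (κ : ℝ) (σ : Fin h × Fin p → Bool) : Matrix (Fin h) (Fin p × Fin b) ℝ :=
  Matrix.of fun i s => κ * sg (σ (i, s.1))

def Mm {h p b : ℕ} (κ : ℝ) (σ : Fin h × Fin p → Bool) :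
    Matrix (Fin h ⊕ (Fin p × Fin b)) (Fin h ⊕ (Fin p × Fin b)) ℝ :=
  Matrix.fromBlocks 0 (Bm κ σ) (Bm κ σ).transpose 0

def Dm {h p b : ℕ} (i : Fin h × Fin p) :
    Matrix (Fin h ⊕ (Fin p × Fin b)) (Fin h ⊕ (Fin p × Fin b)) ℝ :=
  Matrix.fromBlocks 0 (Matrix.of fun j s => if (j, s.1) = i then (1 : ℝ) else 0) 0 0

lemma Mm_rank {h p b : ℕ} (κ : ℝ) (σ : Fin h × Fin p → Bool) :
    (Mm (b := b) κ σ).rank ≤ p + p := by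
  set B0 : Matrix (Fin h) (Fin p) ℝ := Matrix.of fun i s => κ * sg (σ (i, s)) with hB0
  set E : Matrix (Fin p) (Fin p × Fin b) ℝ := Matrix.of fun s t => if s = t.1 then (1 : ℝ) else 0
    with hE
  have e : (Bm (b := b) κ σ) = B0 * E := by
    ext i s
    simp [Bm, hB0, hE, Matrix.mul_apply]
  have e2 : Mm (b := b) κ σ = Matrix.fromBlocks B0 0 0 E.transpose *
      Matrix.fromBlocks 0 E B0.transpose 0 := by
    rw [Matrix.fromBlocks_multiply, Mm, e, Matrix.transpose_mul]
    simp
  rw [e2]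
  refine (Matrix.rank_mul_le_left _ _).trans ((Matrix.rank_le_card_width _).trans ?_)
  simp

lemma sum_blk {h p b : ℕ} (f : Fin h × Fin p → ℝ) :
    ∑ i : Fin h, ∑ s : Fin p × Fin b, f (i, s.1) = b * ∑ x, f x := by
  simp only [Fintype.sum_prod_type, Finset.sum_const, Finset.card_univ, Fintype.card_fin,
    nsmul_eq_mul, ← Finset.mul_sum]

lemma ip_D {h p b : ℕ} (κ : ℝ) (σ : Fin h × Fin p → Bool) (i : Fin h × Fin p) :
    ip (Mm (b := b) κ σ) (Dm i) = κ * b * sg (σ i) := by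
  simp only [ip, Mm, Dm, Fintype.sum_sum_type, Matrix.fromBlocks_apply₁₁,
    Matrix.fromBlocks_apply₁₂, Matrix.fromBlocks_apply₂₁, Matrix.fromBlocks_apply₂₂,
    Matrix.zero_apply, zero_mul, mul_zero, Finset.sum_const_zero, zero_add, add_zero, Bm,
    Matrix.of_apply]
  have := sum_blk (b := b) (fun x : Fin h × Fin p => κ * sg (σ x) * if x = i then (1 : ℝ) else 0)
  rw [this]
  simp
  ring

lemma ip_DD {h p b : ℕ} (i j : Fin h × Fin p) :
    ip (Dm (b := b) i) (Dm j) = if i = j then (b : ℝ) else 0 := by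
  simp only [ip, Dm, Fintype.sum_sum_type, Matrix.fromBlocks_apply₁₁,
    Matrix.fromBlocks_apply₁₂, Matrix.fromBlocks_apply₂₁, Matrix.fromBlocks_apply₂₂,
    Matrix.zero_apply, zero_mul, mul_zero, Finset.sum_const_zero, zero_add, add_zero,
    Matrix.of_apply]
  have := sum_blk (b := b) (fun x : Fin h × Fin p =>
    (if x = i then (1 : ℝ) else 0) * if x = j then (1 : ℝ) else 0)
  rw [this]
  simp
  congr 1
  exact propext eq_comm

lemma ip_MM {h p b : ℕ} (κ κ' : ℝ) (σ σ' : Fin h × Fin p → Bool) :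
    ip (Mm (b := b) κ σ - Mm κ' σ') (Mm κ σ - Mm κ' σ') =
      2 * b * ∑ x, (κ * sg (σ x) - κ' * sg (σ' x)) ^ 2 := by
  simp only [ip, Mm, Matrix.sub_apply, Fintype.sum_sum_type, Matrix.fromBlocks_apply₁₁,
    Matrix.fromBlocks_apply₁₂, Matrix.fromBlocks_apply₂₁, Matrix.fromBlocks_apply₂₂,
    Matrix.zero_apply, sub_zero, mul_zero, Finset.sum_const_zero, zero_add, add_zero, Bm,
    Matrix.of_apply, Matrix.transpose_apply]
  have := sum_blk (b := b) (fun x : Fin h × Fin p =>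
    (κ * sg (σ x) - κ' * sg (σ' x)) * (κ * sg (σ x) - κ' * sg (σ' x)))
  rw [this]
  rw [Finset.sum_comm, this]
  simp_rw [sq]
  ring

lemma case3 {m n r l k0 h p b : ℕ} (hm : 1 ≤ m) (hn : 1 ≤ n) (c ρ a : ℝ) (ha : 0 < a)
    (hlog : 2 ≤ Real.log m) (lam : ℕ → ℝ) (hlm : l ≤ m)
    (φ : ℕ → Fin m → ℝ) (hE : IsEigenData m c lam φ k0) (κ : ℝ) (hκ : 0 ≤ κ)
    (hh : 1 ≤ h) (hh2 : 2 * h ≤ l) (hh3 : l ≤ 3 * h) (hp : 1 ≤ p) (hb : 1 ≤ b)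
    (hpb : p * b ≤ h) (hpb2 : h ≤ 2 * (p * b)) (hpr : p + p ≤ r)
    (A1 : n * (256 * κ ^ 2 * l) ≤ a ^ 2 * (m : ℝ) ^ 2 * (3 * p))
    (A2 : lam l * (κ ^ 2 * (l : ℝ) ^ 2) ≤ ρ ^ 2 * (m : ℝ) ^ 2)
    (A3 : 256 * κ ^ 2 * (sparsity m φ * Real.log m) ≤ a ^ 2)
    (Shat : (Fin n → Obs m) → Matrix (Fin m) (Fin m) ℝ) (e : ℝ≥0∞)
    (he : e ≤ ENNReal.ofReal (κ ^ 2 * (l : ℝ) ^ 2 / (576 * (m : ℝ) ^ 2))) :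
    ENNReal.ofReal (1 / 64) ≤
            ⨆ (P : Measure (Obs m)) (_ : MemP m r ρ a lam φ P),
              (Measure.pi fun _ : Fin n => P)
                {ω | e ≤ ENNReal.ofReal (l2PiSq (Shat ω - regKernel m P))} := by
  have hm' : (0 : ℝ) < m := by exact_mod_cast hm
  have hl1 : 1 ≤ l := by omega
  have hl' : (0 : ℝ) < l := by exact_mod_cast hl1
  have hh' : (1 : ℝ) ≤ h := by exact_mod_cast hh
  have hb' : (1 : ℝ) ≤ b := by exact_mod_cast hb
  have hp' : (1 : ℝ) ≤ p := by exact_mod_cast hp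
  have hh2' : 2 * (h : ℝ) ≤ l := by exact_mod_cast hh2
  have hh3' : (l : ℝ) ≤ 3 * h := by exact_mod_cast hh3
  have hpb' : (p : ℝ) * b ≤ h := by exact_mod_cast hpb
  have hpb2' : (h : ℝ) ≤ 2 * (p * b) := by exact_mod_cast hpb2
  have hd : (1 : ℝ) ≤ sparsity m φ := by exact_mod_cast sparsity_pos φ hE.orth hm
  obtain ⟨ι, hι, hιl⟩ := exists_idx (Fin h ⊕ (Fin p × Fin b)) l (by simp; omega)
  have hι1 : ∀ j, ι j ∈ Finset.Icc 1 m := fun j =>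
    Finset.mem_Icc.mpr ⟨(hιl j).1, (hιl j).2.trans hlm⟩
  have hinl : ∀ u, ∑ j : Fin h, φ (ι (Sum.inl j)) u ^ 2 ≤ 1 := fun u =>
    row_sq_idx φ hE.orth (fun j => ι (Sum.inl j)) (hι.comp Sum.inl_injective) (fun j => hι1 _) u
  have hinr : ∀ u, ∑ j : Fin p × Fin b, φ (ι (Sum.inr j)) u ^ 2 ≤ 1 := fun u =>
    row_sq_idx φ hE.orth (fun j => ι (Sum.inr j)) (hι.comp Sum.inr_injective) (fun j => hι1 _) u
  have hcol : ∀ v, ∑ s : Fin p, (∑ k : Fin b, φ (ι (Sum.inr (s, k))) v) ^ 2 ≤ sparsity m φ := by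
    intro v
    calc _ ≤ ∑ s : Fin p, (sparsity m φ : ℝ) * ∑ k : Fin b, φ (ι (Sum.inr (s, k))) v ^ 2 := by
          refine Finset.sum_le_sum fun s _ => ?_
          have := cs_sparse φ (fun k : Fin b => ι (Sum.inr (s, k))) (by
            intro k k' hk
            have := hι hk
            simpa using this) (fun k => hι1 _) v (fun _ => 1) (by simp)
          simpa using this
      _ = (sparsity m φ : ℝ) * ∑ j : Fin p × Fin b, φ (ι (Sum.inr j)) v ^ 2 := by
          rw [← Finset.mul_sum, Fintype.sum_prod_type]
      _ ≤ (sparsity m φ : ℝ) * 1 := by gcongr; exact hinr v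
      _ = _ := mul_one _
  obtain ⟨bad, hb1, hg⟩ := hoef_bad (fun (x : Fin m × Fin m) (i : Fin h × Fin p) =>
      φ (ι (Sum.inl i.1)) x.1 * ∑ k : Fin b, φ (ι (Sum.inr (i.2, k))) x.2) (sparsity m φ) m hlog
    (by simp [sq]) (by linarith) (by
      intro x
      rw [Fintype.sum_prod_type]
      simp only [mul_pow, ← Finset.mul_sum, ← Finset.sum_mul]
      calc _ ≤ (1 : ℝ) * sparsity m φ := by
            gcongr
            · exact hinl _
            · exact hcol _
        _ = _ := one_mul _)
  have : Nonempty (Fin h × Fin p) := ⟨(⟨0, hh⟩, ⟨0, hp⟩)⟩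
  refine core2 hm hn c ρ a ha lam φ hE hlm hl1 (I := Fin h × Fin p) ι hι hιl
    (fun σ => Mm κ σ) (fun i => Dm i)
    b (κ * b) (by linarith) (by positivity)
    ip_DD (ip_D κ) ?_ bad hb1 ?_ ?_ ?_ ?_ Shat e ?_
  · intro σ i
    rw [ip_MM]
    have : ∑ x, (κ * sg (σ x) - κ * sg (flipAt σ i x)) ^ 2 = 4 * κ ^ 2 := by
      rw [Finset.sum_eq_single i]
      · simp [flipAt]
        cases σ i <;> simp [sg] <;> ring
      · intro j _ hj
        simp [flipAt, hj]
      · simp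
    rw [this]
    have h1 : (l : ℝ) * (256 * (n * κ ^ 2 * b)) ≤ l * (3 * (a ^ 2 * (m : ℝ) ^ 2)) := by
      have h2 := mul_le_mul_of_nonneg_right A1 (by positivity : (0 : ℝ) ≤ b)
      have h3 : (p : ℝ) * b ≤ l := by linarith
      have h4 : 3 * (a ^ 2 * (m : ℝ) ^ 2) * (p * b) ≤ 3 * (a ^ 2 * (m : ℝ) ^ 2) * l := by gcongr
      linarith
    have h5 := le_of_mul_le_mul_left h1 hl'
    have h6 : 0 ≤ a ^ 2 * (m : ℝ) ^ 2 := by positivity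
    linarith
  · intro σ hσ u v
    set T : Fin m → Fin m → ℝ := fun u v => ∑ i : Fin h × Fin p, sg (σ i) *
      (φ (ι (Sum.inl i.1)) u * ∑ k : Fin b, φ (ι (Sum.inr (i.2, k))) v) with hT
    have hTb : ∀ u v, T u v ^ 2 ≤ 16 * sparsity m φ * Real.log m := fun u v => hg σ hσ (u, v)
    have hTe : ∀ u v, κ * T u v = ∑ i : Fin h, ∑ s : Fin p × Fin b,
        φ (ι (Sum.inl i)) u * (κ * sg (σ (i, s.1))) * φ (ι (Sum.inr s)) v := by
      intro u v
      simp only [hT, Fintype.sum_prod_type, Finset.mul_sum]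
      refine Finset.sum_congr rfl fun i _ => Finset.sum_congr rfl fun s _ =>
        Finset.sum_congr rfl fun k _ => ?_
      ring
    have e1 : ∑ j, ∑ k, φ (ι j) u * Mm (b := b) κ σ j k * φ (ι k) v = κ * T u v + κ * T v u := by
      rw [hTe u v, hTe v u]
      simp only [Mm, Fintype.sum_sum_type, Matrix.fromBlocks_apply₁₁,
        Matrix.fromBlocks_apply₁₂, Matrix.fromBlocks_apply₂₁, Matrix.fromBlocks_apply₂₂,
        Matrix.zero_apply, zero_mul, mul_zero, Finset.sum_const_zero, zero_add, add_zero, Bm,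
        Matrix.of_apply, Matrix.transpose_apply]
      congr 1
      rw [Finset.sum_comm]
      refine Finset.sum_congr rfl fun i _ => Finset.sum_congr rfl fun s _ => ?_
      ring
    rw [e1]
    apply abs_le_of_sq_le_sq _ (by positivity)
    have h1 := hTb u v
    have h2 := hTb v u
    have h3 : (T u v + T v u) ^ 2 ≤ 64 * (sparsity m φ * Real.log m) := by
      have := sq_nonneg (T u v - T v u)
      linarith
    calc _ = κ ^ 2 * (T u v + T v u) ^ 2 := by ring
      _ ≤ κ ^ 2 * (64 * (sparsity m φ * Real.log m)) := by gcongr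
      _ ≤ _ := by linarith
  · intro σ
    rw [Matrix.IsSymm, Mm, Matrix.fromBlocks_transpose]
    simp
  · intro σ
    exact (Mm_rank κ σ).trans hpr
  · intro σ
    have h1 : ip (Mm (b := b) κ σ) (Mm κ σ) = 2 * b * (h * p) * κ ^ 2 := by
      have := ip_MM (b := b) κ 0 σ σ
      have e0 : Mm (b := b) 0 σ = 0 := by
        ext j k
        rcases j with j | j <;> rcases k with k | k <;> simp [Mm, Bm]
      rw [e0, sub_zero] at this
      rw [this]
      simp [mul_pow, sg_sq']
      ring
    rw [h1]
    refine le_trans ?_ A2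
    have := hE.nonneg l (Finset.mem_Icc.mpr ⟨hl1, hlm⟩)
    have h2 : 2 * b * (h * p) * κ ^ 2 ≤ κ ^ 2 * (l : ℝ) ^ 2 := by
      have h3 : (h : ℝ) * (p * b) ≤ h * h := by gcongr
      have h4 : (2 * (h : ℝ)) ^ 2 ≤ l ^ 2 := by gcongr
      have h5 : 2 * ((h : ℝ) * (p * b)) ≤ l ^ 2 := by nlinarith
      have := mul_le_mul_of_nonneg_left h5 (sq_nonneg κ)
      linarith
    gcongr
  · refine he.trans (ENNReal.ofReal_le_ofReal ?_)
    rw [div_le_div_iff₀ (by positivity) (by positivity)]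
    simp only [Fintype.card_prod, Fintype.card_fin, Nat.cast_mul]
    have h9 : (l : ℝ) ^ 2 ≤ 18 * ((h : ℝ) * ((p : ℝ) * (b : ℝ))) := by
      calc (l : ℝ) ^ 2 ≤ (3 * (h : ℝ)) ^ 2 := by gcongr
        _ = 9 * ((h : ℝ) * (h : ℝ)) := by ring
        _ ≤ 9 * ((h : ℝ) * (2 * ((p : ℝ) * (b : ℝ)))) := by gcongr
        _ = 18 * ((h : ℝ) * ((p : ℝ) * (b : ℝ))) := by ring
    have h10 : 0 ≤ 32 * κ ^ 2 * b * (m : ℝ) ^ 2 := by positivity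
    have h11 := mul_le_mul_of_nonneg_left h9 h10
    linarith

lemma main_aux {m n r l k0 : ℕ} (hm : 1 ≤ m) (hn : 1 ≤ n) (hr : 1 ≤ r) (c ρ a : ℝ) (ha : 0 < a)
    (hlog : 2 ≤ Real.log m) (lam : ℕ → ℝ) (hl1 : 1 ≤ l) (hlm : l ≤ m)
    (φ : ℕ → Fin m → ℝ) (hE : IsEigenData m c lam φ k0) (δ : ℝ) (hδ : 0 ≤ δ)
    (H1 : δ * n ≤ a ^ 2 * (min r l : ℕ) * l)
    (H2 : lam l * δ ≤ ρ ^ 2)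
    (H3 : δ * (sparsity m φ * Real.log m) * (m : ℝ) ^ 2 ≤ a ^ 2 * (l : ℝ) ^ 2)
    (Shat : (Fin n → Obs m) → Matrix (Fin m) (Fin m) ℝ) (e : ℝ≥0∞)
    (he : e ≤ ENNReal.ofReal (δ / (256 * 576))) :
    ENNReal.ofReal (1 / 64) ≤
            ⨆ (P : Measure (Obs m)) (_ : MemP m r ρ a lam φ P),
              (Measure.pi fun _ : Fin n => P)
                {ω | e ≤ ENNReal.ofReal (l2PiSq (Shat ω - regKernel m P))} := by
  have hm' : (0 : ℝ) < m := by exact_mod_cast hm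
  have hl' : (0 : ℝ) < l := by exact_mod_cast hl1
  obtain ⟨κ, hκ, hκ2⟩ : ∃ κ : ℝ, 0 ≤ κ ∧ 256 * κ ^ 2 * (l : ℝ) ^ 2 = δ * (m : ℝ) ^ 2 := by
    refine ⟨√(δ / 256) * m / l, by positivity, ?_⟩
    rw [div_pow, mul_pow, Real.sq_sqrt (by positivity)]
    field_simp
  have hL : (0 : ℝ) < (l : ℝ) ^ 2 := by positivity
  have hlam := hE.nonneg l (Finset.mem_Icc.mpr ⟨hl1, hlm⟩)
  have A1 : n * (256 * κ ^ 2 * l) ≤ a ^ 2 * (m : ℝ) ^ 2 * (min r l : ℕ) := by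
    refine le_of_mul_le_mul_left ?_ hl'
    have h1 := mul_le_mul_of_nonneg_right H1 (sq_nonneg (m : ℝ))
    have h2 : (l : ℝ) * (n * (256 * κ ^ 2 * l)) = δ * n * (m : ℝ) ^ 2 := by
      calc _ = n * (256 * κ ^ 2 * (l : ℝ) ^ 2) := by ring
        _ = _ := by rw [hκ2]; ring
    linarith
  have A2 : lam l * (κ ^ 2 * (l : ℝ) ^ 2) ≤ ρ ^ 2 * (m : ℝ) ^ 2 := by
    have h1 := mul_le_mul_of_nonneg_right H2 (sq_nonneg (m : ℝ))
    have h2 : lam l * (256 * κ ^ 2 * (l : ℝ) ^ 2) = lam l * (δ * (m : ℝ) ^ 2) := by rw [hκ2]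
    have h3 : 0 ≤ lam l * (κ ^ 2 * (l : ℝ) ^ 2) := by positivity
    linarith
  have A3 : 256 * κ ^ 2 * (sparsity m φ * Real.log m) ≤ a ^ 2 := by
    refine le_of_mul_le_mul_right ?_ hL
    calc _ = (256 * κ ^ 2 * (l : ℝ) ^ 2) * (sparsity m φ * Real.log m) := by ring
      _ = δ * (sparsity m φ * Real.log m) * (m : ℝ) ^ 2 := by rw [hκ2]; ring
      _ ≤ _ := H3
  have he' : e ≤ ENNReal.ofReal (κ ^ 2 * (l : ℝ) ^ 2 / (576 * (m : ℝ) ^ 2)) := by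
    refine he.trans (ENNReal.ofReal_le_ofReal (le_of_eq ?_))
    rw [div_eq_div_iff (by positivity) (by positivity)]
    linarith
  rcases Nat.lt_or_ge l 2 with h2 | h2
  · obtain rfl : l = 1 := by omega
    have e1 : min r 1 = 1 := by omega
    rw [e1] at A1
    simp only [Nat.cast_one, mul_one, one_pow] at A1 A2 he'
    exact case1 hm hn hr c ρ a ha hlog lam φ hE κ hκ A1 A2 A3 Shat e he'
  · rcases Nat.lt_or_ge r 2 with h3 | h3
    · have e1 : min r l = 1 := by omega
      rw [e1, Nat.cast_one, mul_one] at A1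
      exact case2 (h := l / 2) hm hn hr c ρ a ha hlog lam hlm φ hE κ hκ (by omega) (by omega)
        (by omega) A1 A2 A3 Shat e he'
    · have hp : 1 ≤ min r l / 2 := by omega
      have hph : min r l / 2 ≤ l / 2 := by omega
      have hmin : min r l ≤ 3 * (min r l / 2) := by omega
      have hpr : min r l / 2 + min r l / 2 ≤ r := by omega
      have hmin' : ((min r l : ℕ) : ℝ) ≤ 3 * ((min r l / 2 : ℕ) : ℝ) := by exact_mod_cast hmin
      generalize min r l / 2 = p at *
      have hb : 1 ≤ l / 2 / p := (Nat.one_le_div_iff (by omega)).mpr hph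
      have hpb : p * (l / 2 / p) ≤ l / 2 := Nat.mul_div_le _ _
      have hpb2 : l / 2 ≤ 2 * (p * (l / 2 / p)) := by
        have h4 := Nat.div_add_mod (l / 2) p
        have h5 := Nat.mod_lt (l / 2) (by omega : p > 0)
        have h6 : p * 1 ≤ p * (l / 2 / p) := Nat.mul_le_mul_left _ hb
        omega
      refine case3 (h := l / 2) (p := p) (b := l / 2 / p) hm hn c ρ a ha hlog lam hlm φ hE κ hκ
        (by omega) (by omega) (by omega) hp hb hpb hpb2 hpr (A1.trans ?_) A2 A3 Shat e he'
      gcongr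


/-- **Theorem 3 (minimax lower bound, sparse case).** -/
theorem minimax_lower_bound_sparse (c : ℝ) (hc : 1 ≤ c) :
    ∃ c₁ > (0 : ℝ), ∃ c₂ > (0 : ℝ),
      ∀ (m n r k0 : ℕ) (ρ a : ℝ) (lam : ℕ → ℝ) (φ : ℕ → Fin m → ℝ),
        1 ≤ m → 1 ≤ n → 1 ≤ r → r ≤ m → 0 < ρ → 0 < a →
        2 ≤ Real.log m →
        IsEigenData m c lam φ k0 →
        ∀ Shat : (Fin n → Obs m) → Matrix (Fin m) (Fin m) ℝ,
          (∀ u v : Fin m, Measurable fun ω => Shat ω u v) →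
          ENNReal.ofReal c₂ ≤
            ⨆ (P : Measure (Obs m)) (_ : MemP m r ρ a lam φ P),
              (Measure.pi fun _ : Fin n => P)
                {ω | ENNReal.ofReal c₁ *
                    delta4 m n r (min k0 32) (sparsity m φ) ρ a lam ≤
                  ENNReal.ofReal (l2PiSq (Shat ω - regKernel m P))} := by
  refine ⟨1 / (256 * 576), by norm_num, 1 / 64, by norm_num, ?_⟩
  intro m n r k0 ρ a lam φ hm hn hr hrm hρ ha hlog hE Shat _
  obtain ⟨hk1, hkm, -⟩ := hE.k0_mem
  have hm' : (0 : ℝ) < m := by exact_mod_cast hm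
  have hn' : (0 : ℝ) < n := by exact_mod_cast hn
  have hd : (1 : ℝ) ≤ sparsity m φ := by exact_mod_cast sparsity_pos φ hE.orth hm
  set t : ℕ → ℝ≥0∞ := fun l => min (ENNReal.ofReal (a ^ 2 * (min r l : ℝ) * (l : ℝ) / n))
      (min (ENNReal.ofReal (ρ ^ 2) / ENNReal.ofReal (lam l))
        (ENNReal.ofReal
          ((a ^ 2 / (sparsity m φ * Real.log m)) * ((l : ℝ) ^ 2 / (m : ℝ) ^ 2)))) with ht
  obtain ⟨l, hl, hmax⟩ := Finset.exists_max_image (Finset.Icc (min k0 32) m) t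
    ⟨m, Finset.mem_Icc.mpr ⟨(min_le_left _ _).trans hkm, le_rfl⟩⟩
  have hdel : delta4 m n r (min k0 32) (sparsity m φ) ρ a lam ≤ t l := iSup₂_le hmax
  have hl2 := Finset.mem_Icc.mp hl
  have hl1 : 1 ≤ l := by omega
  have hlm : l ≤ m := hl2.2
  have hl' : (0 : ℝ) < l := by exact_mod_cast hl1
  have T1 : t l ≤ ENNReal.ofReal (a ^ 2 * (min r l : ℝ) * (l : ℝ) / n) := min_le_left _ _
  have T2 : t l ≤ ENNReal.ofReal (ρ ^ 2) / ENNReal.ofReal (lam l) :=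
    (min_le_right _ _).trans (min_le_left _ _)
  have T3 : t l ≤ ENNReal.ofReal
          ((a ^ 2 / (sparsity m φ * Real.log m)) * ((l : ℝ) ^ 2 / (m : ℝ) ^ 2)) :=
    (min_le_right _ _).trans (min_le_right _ _)
  have hfin : t l ≠ ⊤ := ne_top_of_le_ne_top ENNReal.ofReal_ne_top T1
  obtain ⟨δ, hδ, hδt⟩ : ∃ δ : ℝ, 0 ≤ δ ∧ t l = ENNReal.ofReal δ :=
    ⟨(t l).toReal, ENNReal.toReal_nonneg, (ENNReal.ofReal_toReal hfin).symm⟩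
  rw [hδt] at T1 T2 T3 hdel
  refine main_aux (l := l) hm hn hr c ρ a ha hlog lam hl1 hlm φ hE δ hδ ?_ ?_ ?_ Shat _ ?_
  · have := (ENNReal.ofReal_le_ofReal_iff (by positivity)).mp T1
    rw [le_div_iff₀ hn'] at this
    push_cast
    exact this
  · rcases (hE.nonneg l (Finset.mem_Icc.mpr ⟨hl1, hlm⟩)).eq_or_lt with h0 | h0
    · rw [← h0, zero_mul]; positivity
    · rw [← ENNReal.ofReal_div_of_pos h0] at T2
      have := (ENNReal.ofReal_le_ofReal_iff (by positivity)).mp T2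
      rw [le_div_iff₀ h0] at this
      linarith
  · have hq : 0 < (sparsity m φ : ℝ) * Real.log m := by
      apply mul_pos <;> linarith
    have := (ENNReal.ofReal_le_ofReal_iff (by positivity)).mp T3
    rw [div_mul_div_comm, le_div_iff₀ (by positivity)] at this
    linarith
  · calc _ ≤ ENNReal.ofReal (1 / (256 * 576)) * ENNReal.ofReal δ := by gcongr
      _ = ENNReal.ofReal (1 / (256 * 576) * δ) := (ENNReal.ofReal_mul (by norm_num)).symm
      _ ≤ _ := ENNReal.ofReal_le_ofReal (by apply le_of_eq; ring)

end
end

section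
/- Tail sum bounds for eigenvalues weighted by coherence: Let c_γ := (c+γ)/γ. For every S ∈ 𝒮_V with support L, every φ ∈ Ψ_{S,W} and every λ > 0: (i) ∑_{k : λ_k > λ} ‖P_L φ_k‖²/λ_k ≤ c_γ·φ(λ)/λ, and (ii) ∑_{k : λ_k > λ} 1/λ_k ≤ c_γ·F̄(λ)/λ. -/
open MeasureTheory Finset
open scoped ENNReal NNReal

noncomputable section

/-- Squared norm of the orthogonal projection of `x` onto the support (= range, for a
symmetric matrix) of `S`. -/
def projSuppNormSq {m : ℕ} (S : Matrix (Fin m) (Fin m) ℝ) (x : Fin m → ℝ) : ℝ :=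
  ‖(Submodule.orthogonalProjectionOnto (LinearMap.range (Matrix.toEuclideanLin S))
      ((EuclideanSpace.equiv (Fin m) ℝ).symm x) : EuclideanSpace ℝ (Fin m))‖ ^ 2

/-- The coherence function `φ(S;t) := ∑_{λ_j ≤ t} ‖P_L φ_j‖²`, `L = supp(S)`. -/
def cohFn {m : ℕ} (lam : ℕ → ℝ) (φ : ℕ → Fin m → ℝ) (S : Matrix (Fin m) (Fin m) ℝ)
    (t : ℝ) : ℝ :=
  ∑ j ∈ (Finset.Icc 1 m).filter fun j => lam j ≤ t, projSuppNormSq S (φ j)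

/-- The regularized coherence function
`φ̄(S;t) := sup_{0 < σ ≤ t} F̄(σ)·sup_{σ' ≥ σ} φ(S;σ')/F̄(σ')`. -/
def cohBar {m : ℕ} (lam : ℕ → ℝ) (φ : ℕ → Fin m → ℝ) (Fbar : ℝ → ℝ)
    (S : Matrix (Fin m) (Fin m) ℝ) (t : ℝ) : ℝ :=
  sSup ((fun σ => Fbar σ *
      sSup ((fun σ' => cohFn lam φ S σ' / Fbar σ') '' Set.Ici σ)) '' Set.Ioc 0 t)

/-- `φ̄(S; ε̄⁻¹)`, with the convention `φ̄(S; +∞) := rank S` when `ε̄ = 0`. -/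
def cohBarInv {m : ℕ} (lam : ℕ → ℝ) (φ : ℕ → Fin m → ℝ) (Fbar : ℝ → ℝ)
    (S : Matrix (Fin m) (Fin m) ℝ) (ebar : ℝ) : ℝ :=
  if ebar = 0 then (S.rank : ℝ) else cohBar lam φ Fbar S ebar⁻¹

/-- The nuclear norm of a symmetric matrix: the sum of absolute values of its
eigenvalues. -/
def nuclearNorm {m : ℕ} (S : Matrix (Fin m) (Fin m) ℝ) : ℝ :=
  if h : S.IsHermitian then ∑ i, |h.eigenvalues i| else 0

/-- The spectral function `F(t) := #{j : λ_j ≤ t}`. -/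
def specFn (m : ℕ) (lam : ℕ → ℝ) (t : ℝ) : ℕ :=
  ((Finset.Icc 1 m).filter fun j => lam j ≤ t).card

/-- `F̄` is a regularized majorant of the spectral function `F`: nondecreasing,
`F ≤ F̄`, `t ↦ F̄(t)/t` nonincreasing, `∫_t^∞ F̄(s)s⁻² ds ≤ γ⁻¹ F̄(t)/t`, and
`F̄(t) = m` for `t ≥ λ_m`. -/
structure IsSpectralMajorant (m : ℕ) (γ : ℝ) (lam : ℕ → ℝ) (Fbar : ℝ → ℝ) : Prop where
  pos : ∀ t : ℝ, 0 < t → 0 < Fbar t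
  mono : ∀ s t : ℝ, 0 < s → s ≤ t → Fbar s ≤ Fbar t
  majorant : ∀ t : ℝ, 0 < t → (specFn m lam t : ℝ) ≤ Fbar t
  ratio_anti : ∀ s t : ℝ, 0 < s → s ≤ t → Fbar t / t ≤ Fbar s / s
  integral : ∀ t : ℝ, 0 < t → (∫ s in Set.Ioi t, Fbar s / s ^ 2) ≤ γ⁻¹ * Fbar t / t
  top : ∀ t : ℝ, lam m ≤ t → Fbar t = m

/-- The quantity `t_{n,m} = t + 3 log(2 log₂ n + ½ log₂(λ_m/λ̃) + 2)`. -/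
def tnm (n m : ℕ) (t lamTilde : ℝ) (lam : ℕ → ℝ) : ℝ :=
  t + 3 * Real.log (2 * Real.logb 2 n + (1 / 2) * Real.logb 2 (lam m / lamTilde) + 2)

/-- `(μ, ψ)` is a spectral representation `S = ∑ᵢ μᵢ (ψᵢ ⊗ ψᵢ)` of the symmetric
kernel `S`, with `ψ₁,…,ψ_m` orthonormal. -/
def SpectralRep (m : ℕ) (S : Matrix (Fin m) (Fin m) ℝ) (μ : ℕ → ℝ)
    (ψ : ℕ → Fin m → ℝ) : Prop :=
  OrthonormalFamily m ψ ∧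
    S = Matrix.of fun u v => ∑ i ∈ Finset.Icc 1 m, μ i * ψ i u * ψ i v

/-- `‖P_L x‖²` for `L = supp(S) = l.s.{ψᵢ : μᵢ ≠ 0}`, computed from the spectral data. -/
def projNormSqData {m : ℕ} (μ : ℕ → ℝ) (ψ : ℕ → Fin m → ℝ) (x : Fin m → ℝ) : ℝ :=
  ∑ i ∈ (Finset.Icc 1 m).filter fun i => μ i ≠ 0, (∑ v, x v * ψ i v) ^ 2

/-- The coherence function `φ(S;t) := ∑_{λ_j ≤ t} ‖P_L φ_j‖²`, from the spectral data. -/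
def cohFnData {m : ℕ} (lam : ℕ → ℝ) (φ : ℕ → Fin m → ℝ) (μ : ℕ → ℝ)
    (ψ : ℕ → Fin m → ℝ) (t : ℝ) : ℝ :=
  ∑ j ∈ (Finset.Icc 1 m).filter fun j => lam j ≤ t, projNormSqData μ ψ (φ j)

/-- Membership of `φfun` in the class `Ψ_{S,W}`: `φfun` is nonnegative and nondecreasing
on `(0,∞)`, dominates the coherence function `φ(S;·)`, and `φfun/F̄` is nonincreasing. -/
def MemPsi {m : ℕ} (lam : ℕ → ℝ) (φ : ℕ → Fin m → ℝ) (Fbar : ℝ → ℝ) (μ : ℕ → ℝ)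
    (ψ : ℕ → Fin m → ℝ) (φfun : ℝ → ℝ) : Prop :=
  (∀ t : ℝ, 0 < t → 0 ≤ φfun t) ∧
  (∀ s t : ℝ, 0 < s → s ≤ t → φfun s ≤ φfun t) ∧
  (∀ t : ℝ, 0 < t → cohFnData lam φ μ ψ t ≤ φfun t) ∧
  (∀ s t : ℝ, 0 < s → s ≤ t → φfun t / Fbar t ≤ φfun s / Fbar s)

/-- General tail bound for weights `a` whose distribution function is dominated by `g`. -/
theorem tail_aux (c γ : ℝ) (hc : 1 ≤ c) (hγ0 : 0 < γ) (m : ℕ) (lam : ℕ → ℝ) (Fbar : ℝ → ℝ)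
    (hF : IsSpectralMajorant m γ lam Fbar) (a : ℕ → ℝ) (ha : ∀ k, 0 ≤ a k) (g : ℝ → ℝ)
    (hg0 : ∀ t : ℝ, 0 < t → 0 ≤ g t)
    (hA : ∀ t : ℝ, 0 < t → (∑ j ∈ (Finset.Icc 1 m).filter fun j => lam j ≤ t, a j) ≤ g t)
    (hg : ∀ s t : ℝ, 0 < s → s ≤ t → g t / Fbar t ≤ g s / Fbar s) (t : ℝ) (ht : 0 < t) :
    (∑ k ∈ (Finset.Icc 1 m).filter fun k => t < lam k, a k * (lam k)⁻¹)
      ≤ (c + γ) / γ * (g t / t) := by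
  have hFt := hF.pos t ht
  have hpow : IntegrableOn (fun s : ℝ => s ^ (-2 : ℝ)) (Set.Ioi t) :=
    integrableOn_Ioi_rpow_of_lt (by norm_num) ht
  have hFint : IntegrableOn (fun s => Fbar s / s ^ 2) (Set.Ioi t) := by
    have hmeas : AEStronglyMeasurable Fbar (volume.restrict (Set.Ioi t)) := by
      have : MonotoneOn Fbar (Set.Ioi t) := fun x hx y _ hxy =>
        hF.mono x y (ht.trans hx) hxy
      exact (aemeasurable_restrict_of_monotoneOn measurableSet_Ioi this).aestronglyMeasurable
    have h2 : IntegrableOn (fun s => Fbar s * s ^ (-2 : ℝ)) (Set.Ioi t) := by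
      refine Integrable.bdd_mul (c := (m : ℝ)) hpow hmeas ?_
      filter_upwards [ae_restrict_mem measurableSet_Ioi] with s hs
      have hs0 : 0 < s := ht.trans hs
      rw [Real.norm_of_nonneg (hF.pos s hs0).le, ← hF.top (max s (lam m)) (le_max_right _ _)]
      exact hF.mono _ _ hs0 (le_max_left _ _)
    refine h2.congr_fun (fun s hs => ?_) measurableSet_Ioi
    have hs0 : 0 < s := ht.trans hs
    simp only
    rw [Real.rpow_neg hs0.le, div_eq_mul_inv]
    norm_num
  set K := (Finset.Icc 1 m).filter fun k => t < lam k with hK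
  have hterm : ∀ k ∈ K, a k * (lam k)⁻¹ =
      ∫ s in Set.Ioi t, a k * (Set.Ioi (lam k)).indicator (fun s : ℝ => s ^ (-2 : ℝ)) s := by
    intro k hk
    have hk' : t < lam k := (Finset.mem_filter.mp hk).2
    rw [integral_const_mul, setIntegral_indicator measurableSet_Ioi,
      Set.inter_eq_right.mpr (Set.Ioi_subset_Ioi hk'.le),
      integral_Ioi_rpow_of_lt (by norm_num) (ht.trans hk')]
    norm_num
    left
    rw [Real.rpow_neg (ht.trans hk').le, Real.rpow_one]
  have hint : ∀ k ∈ K, Integrable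
      (fun s => a k * (Set.Ioi (lam k)).indicator (fun s : ℝ => s ^ (-2 : ℝ)) s)
      (volume.restrict (Set.Ioi t)) := fun k _ =>
    (Integrable.indicator hpow measurableSet_Ioi).const_mul _
  rw [Finset.sum_congr rfl hterm, ← integral_finsetSum _ hint]
  have hle : (∫ s in Set.Ioi t, ∑ k ∈ K,
        a k * (Set.Ioi (lam k)).indicator (fun s : ℝ => s ^ (-2 : ℝ)) s)
      ≤ ∫ s in Set.Ioi t, g t / Fbar t * (Fbar s / s ^ 2) := by
    refine setIntegral_mono_on (integrable_finsetSum _ hint) (hFint.const_mul _)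
      measurableSet_Ioi (fun s hs => ?_)
    have hs0 : 0 < s := ht.trans hs
    have hFs := hF.pos s hs0
    have e : s ^ (-2 : ℝ) = (s ^ 2)⁻¹ := by
      rw [Real.rpow_neg hs0.le]
      norm_num
    have h1 : (∑ k ∈ K, a k * (Set.Ioi (lam k)).indicator (fun s : ℝ => s ^ (-2 : ℝ)) s)
        ≤ (∑ j ∈ (Finset.Icc 1 m).filter fun j => lam j ≤ s, a j) * (s ^ 2)⁻¹ := by
      rw [Finset.sum_mul, Finset.sum_filter, Finset.sum_filter]
      refine Finset.sum_le_sum fun k _ => ?_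
      have hp : 0 ≤ a k * (s ^ 2)⁻¹ := mul_nonneg (ha k) (by positivity)
      by_cases h3 : lam k < s
      · rw [Set.indicator_of_mem (Set.mem_Ioi.mpr h3), e, if_pos h3.le]
        split_ifs
        · exact le_rfl
        · exact hp
      · rw [Set.indicator_of_notMem (by simpa using h3)]
        simp only [mul_zero, ite_self]
        split_ifs
        · exact hp
        · exact le_rfl
    have h2 : g s ≤ g t / Fbar t * Fbar s := (div_le_iff₀ hFs).mp (hg t s ht (le_of_lt hs))
    calc _ ≤ _ := h1
      _ ≤ (g t / Fbar t * Fbar s) * (s ^ 2)⁻¹ :=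
        mul_le_mul_of_nonneg_right ((hA s hs0).trans h2) (by positivity)
      _ = _ := by ring
  refine hle.trans ?_
  rw [integral_const_mul]
  have hgt := hg0 t ht
  calc _ ≤ g t / Fbar t * (γ⁻¹ * Fbar t / t) :=
        mul_le_mul_of_nonneg_left (hF.integral t ht) (by positivity)
    _ = γ⁻¹ * (g t / t) := by field_simp
    _ ≤ _ := by
        refine mul_le_mul_of_nonneg_right ?_ (by positivity)
        rw [inv_eq_one_div]
        gcongr
        linarith

/-- **Lemma 1 (tail sums of eigenvalues weighted by coherence).** -/
theorem tail_sum_bounds (c γ : ℝ) (hc : 1 ≤ c) (hγ0 : 0 < γ) (hγ1 : γ < 1) :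
    ∀ (m k0 : ℕ) (lam : ℕ → ℝ) (φ : ℕ → Fin m → ℝ) (Fbar : ℝ → ℝ)
      (S : Matrix (Fin m) (Fin m) ℝ) (μ : ℕ → ℝ) (ψ : ℕ → Fin m → ℝ) (φfun : ℝ → ℝ),
      1 ≤ m →
      IsEigenData m c lam φ k0 →
      IsSpectralMajorant m γ lam Fbar →
      SpectralRep m S μ ψ →
      MemPsi lam φ Fbar μ ψ φfun →
      ∀ t : ℝ, 0 < t →
        (∑ k ∈ (Finset.Icc 1 m).filter fun k => t < lam k,
            projNormSqData μ ψ (φ k) / lam k) ≤ (c + γ) / γ * (φfun t / t) ∧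
        (∑ k ∈ (Finset.Icc 1 m).filter fun k => t < lam k, (lam k)⁻¹) ≤
          (c + γ) / γ * (Fbar t / t) := by
  intro m k0 lam φ Fbar S μ ψ φfun _ _ hF _ hΨ t ht
  obtain ⟨h0, _, h2, h3⟩ := hΨ
  constructor
  · have := tail_aux c γ hc hγ0 m lam Fbar hF (fun k => projNormSqData μ ψ (φ k))
      (fun k => Finset.sum_nonneg fun i _ => sq_nonneg _) φfun h0 h2 h3 t ht
    simpa only [div_eq_mul_inv] using this
  · have := tail_aux c γ hc hγ0 m lam Fbar hF (fun _ => 1) (fun _ => zero_le_one) Fbar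
      (fun s hs => (hF.pos s hs).le) (fun s hs => by simpa [specFn] using hF.majorant s hs)
      (fun s u hs hu => by
        rw [div_self (hF.pos s hs).ne', div_self (hF.pos u (hs.trans_le hu)).ne']) t ht
    simpa only [one_mul] using this

end
end

section
/- Spectral truncation approximation of smooth low-rank kernels: Let S_* ∈ 𝒮_V with rank(S_*) ≤ r and ‖W^{1/2}S_*‖_{L₂(Π²)} ≤ ρ, and let l ∈ {1,…,m−1} with λ_{l+1} > 0. Define S_{*,l} := ∑_{i,j=1}^l ⟨S_* φ_i, φ_j⟩·(φ_i ⊗ φ_j). Then: (i) ‖S_{*,l} − S_*‖²_{L₂(Π²)} ≤ 2ρ²/λ_{l+1}; (ii) rank(S_{*,l}) ≤ r; and (iii) ‖S_{*,l}‖_{L₂(Π²)} ≤ ‖S_*‖_{L₂(Π²)}. -/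
open MeasureTheory Finset
open scoped ENNReal NNReal

noncomputable section

/-- The spectral truncation `S_{*,l} := ∑_{i,j=1}^l ⟨S_* φ_i, φ_j⟩ (φ_i ⊗ φ_j)`. -/
def specTrunc {m : ℕ} (l : ℕ) (φ : ℕ → Fin m → ℝ)
    (S : Matrix (Fin m) (Fin m) ℝ) : Matrix (Fin m) (Fin m) ℝ :=
  Matrix.of fun u v =>
    ∑ i ∈ Finset.Icc 1 l, ∑ j ∈ Finset.Icc 1 l,
      (∑ w, S.mulVec (φ i) w * φ j w) * φ i u * φ j v

theorem aux_sum (m l : ℕ) (h : l ≤ m) (f : ℕ → ℝ) :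
    ∑ i ∈ Finset.Icc 1 l, f i = ∑ k : Fin m, if (k : ℕ) < l then f (k + 1) else 0 := by
  rw [Fin.sum_univ_eq_sum_range (fun k => if k < l then f (k + 1) else 0) m, ← Finset.sum_filter]
  refine (Finset.sum_bij (fun k _ => k + 1) ?_ ?_ ?_ ?_).symm
  · intro a ha
    simp only [Finset.mem_filter, Finset.mem_range, Finset.mem_Icc] at *
    omega
  · intro a _ b _ hab
    omega
  · intro b hb
    simp only [Finset.mem_filter, Finset.mem_range, Finset.mem_Icc] at *
    exact ⟨b - 1, by omega, by omega⟩
  · intro a _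
    rfl

theorem aux_vec {m : ℕ} (Q : Matrix (Fin m) (Fin m) ℝ) (hQ : Q.transpose * Q = 1)
    (x : Fin m → ℝ) : ∑ u, (Q.mulVec x u) ^ 2 = ∑ u, (x u) ^ 2 := by
  have h : (Q.mulVec x) ⬝ᵥ (Q.mulVec x) = x ⬝ᵥ x := by
    rw [Matrix.dotProduct_mulVec, ← Matrix.mulVec_transpose, Matrix.mulVec_mulVec, hQ,
      Matrix.one_mulVec]
  simpa [dotProduct, sq] using h

theorem aux_left {m : ℕ} (Q B : Matrix (Fin m) (Fin m) ℝ) (hQ : Q.transpose * Q = 1) :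
    hsNormSq (Q * B) = hsNormSq B := by
  unfold hsNormSq
  rw [Finset.sum_comm, Finset.sum_comm (f := fun u v => B u v ^ 2)]
  refine Finset.sum_congr rfl fun v _ => ?_
  exact aux_vec Q hQ (fun u => B u v)

theorem aux_tr {m : ℕ} (B : Matrix (Fin m) (Fin m) ℝ) :
    hsNormSq B.transpose = hsNormSq B := by
  unfold hsNormSq
  rw [Finset.sum_comm]
  rfl

theorem aux_conj {m : ℕ} (Q B : Matrix (Fin m) (Fin m) ℝ) (hQ : Q.transpose * Q = 1) :
    hsNormSq (Q * B * Q.transpose) = hsNormSq B := by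
  rw [Matrix.mul_assoc, aux_left _ _ hQ, ← aux_tr, Matrix.transpose_mul,
    Matrix.transpose_transpose, aux_left _ _ hQ, aux_tr]

/-- **Spectral truncation approximation of smooth low-rank kernels.** -/
theorem spectral_truncation_approx :
    ∀ (m r l : ℕ) (ρ : ℝ) (lam : ℕ → ℝ) (φ : ℕ → Fin m → ℝ)
      (S : Matrix (Fin m) (Fin m) ℝ),
      1 ≤ m → 1 ≤ l → l ≤ m - 1 → 0 ≤ ρ →
      OrthonormalFamily m φ →
      (∀ k ∈ Finset.Icc 1 m, 0 ≤ lam k) →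
      (∀ k k' : ℕ, 1 ≤ k → k ≤ k' → k' ≤ m → lam k ≤ lam k') →
      0 < lam (l + 1) →
      S.IsSymm → S.rank ≤ r →
      sobolevHSSq lam φ S ≤ ρ ^ 2 * (m : ℝ) ^ 2 →
      l2PiSq (specTrunc l φ S - S) ≤ 2 * ρ ^ 2 / lam (l + 1) ∧
        (specTrunc l φ S).rank ≤ r ∧
        l2PiSq (specTrunc l φ S) ≤ l2PiSq S := by
  intro m r l ρ lam φ S hm hl hlm hρ horth hnn hmono hpos hsymm hrank hsob
  have hm0 : (0 : ℝ) < (m : ℝ) ^ 2 := by positivity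
  obtain ⟨Q, hQdef⟩ : ∃ Q : Matrix (Fin m) (Fin m) ℝ, ∀ u k, Q u k = φ (k + 1) u :=
    ⟨Matrix.of fun u k => φ (k + 1) u, fun _ _ => rfl⟩
  have hQ : Q.transpose * Q = 1 := by
    ext i j
    have := horth (i + 1) (by simp) (j + 1) (by simp)
    simp only [Matrix.mul_apply, Matrix.transpose_apply, hQdef, this, Matrix.one_apply,
      Nat.add_right_cancel_iff, Fin.val_inj]
  have hQ' : Q * Q.transpose = 1 := mul_eq_one_comm.mp hQ
  obtain ⟨A, hA⟩ : ∃ A, A = Q.transpose * S * Q := ⟨_, rfl⟩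
  have hSA : S = Q * A * Q.transpose := by
    rw [hA]
    calc S = (Q * Q.transpose) * S * (Q * Q.transpose) := by simp [hQ']
      _ = _ := by simp only [Matrix.mul_assoc]
  have hAs : ∀ i j, A i j = A j i := by
    intro i j
    have : A.transpose = A := by
      rw [hA]
      simp [Matrix.transpose_mul, hsymm.eq, Matrix.mul_assoc]
    exact congrFun (congrFun this j) i
  have hcol : ∀ k : Fin m, ∀ w, S.mulVec (φ (k + 1)) w = (S * Q) w k := by
    intro k w
    simp [Matrix.mulVec, dotProduct, Matrix.mul_apply, hQdef]
  have hAij : ∀ i j : Fin m, ∑ w, S.mulVec (φ (i + 1)) w * φ (j + 1) w = A j i := by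
    intro i j
    rw [hA, Matrix.mul_assoc, Matrix.mul_apply]
    refine Finset.sum_congr rfl fun w _ => ?_
    rw [hcol, Matrix.transpose_apply, hQdef, mul_comm]
  obtain ⟨D, hD⟩ : ∃ D : Matrix (Fin m) (Fin m) ℝ,
    D = Matrix.diagonal fun k : Fin m => if (k : ℕ) < l then (1 : ℝ) else 0 := ⟨_, rfl⟩
  have hB : ∀ i j, (D * A * D) i j = if (i : ℕ) < l ∧ (j : ℕ) < l then A i j else 0 := by
    intro i j
    rw [hD, Matrix.mul_diagonal, Matrix.diagonal_mul]
    by_cases h1 : (i : ℕ) < l <;> by_cases h2 : (j : ℕ) < l <;> simp [h1, h2]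
  have hT : specTrunc l φ S = Q * (D * A * D) * Q.transpose := by
    ext u v
    have hl' : l ≤ m := by omega
    simp only [specTrunc, Matrix.of_apply]
    rw [aux_sum m l hl', Matrix.mul_assoc, Matrix.mul_apply]
    refine Finset.sum_congr rfl fun i _ => ?_
    rw [aux_sum m l hl', Matrix.mul_apply, hQdef, Finset.mul_sum]
    split_ifs with h1
    · refine Finset.sum_congr rfl fun j _ => ?_
      rw [hB, Matrix.transpose_apply, hQdef, hAij, hAs j i]
      by_cases h2 : (j : ℕ) < l
      · simp [h1, h2]; ring
      · simp [h2]
    · symm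
      refine Finset.sum_eq_zero fun j _ => ?_
      rw [hB]
      simp [h1]
  have hS2 : hsNormSq S = hsNormSq A := by rw [hSA, aux_conj _ _ hQ]
  have hT2 : hsNormSq (specTrunc l φ S) = hsNormSq (D * A * D) := by rw [hT, aux_conj _ _ hQ]
  have hTS : hsNormSq (specTrunc l φ S - S) = hsNormSq (D * A * D - A) := by
    rw [hT]
    nth_rewrite 1 [hSA]
    rw [← Matrix.sub_mul, ← Matrix.mul_sub, aux_conj _ _ hQ]
  refine ⟨?_, ?_, ?_⟩
  · have hsob' : sobolevHSSq lam φ S = ∑ k : Fin m, lam (k + 1) * ∑ j, A j k ^ 2 := by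
      unfold sobolevHSSq
      rw [aux_sum m m le_rfl]
      refine Finset.sum_congr rfl fun k _ => ?_
      rw [if_pos k.2]
      congr 1
      have h1 : (Q.transpose).transpose * Q.transpose = 1 := by simpa using hQ'
      rw [← aux_vec Q.transpose h1]
      refine Finset.sum_congr rfl fun j _ => ?_
      congr 1
      rw [← hAij k j]
      simp only [Matrix.mulVec, dotProduct, Matrix.transpose_apply, hQdef]
      exact Finset.sum_congr rfl fun w _ => mul_comm _ _
    have hkey : lam (l + 1) * ∑ k : Fin m, (if (k : ℕ) < l then 0 else ∑ j, A j k ^ 2)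
        ≤ sobolevHSSq lam φ S := by
      rw [hsob', Finset.mul_sum]
      refine Finset.sum_le_sum fun k _ => ?_
      have h0 : 0 ≤ ∑ j, A j k ^ 2 := Finset.sum_nonneg fun j _ => sq_nonneg _
      split_ifs with h
      · have := hnn (k + 1) (by simp)
        rw [mul_zero]
        positivity
      · exact mul_le_mul_of_nonneg_right (hmono _ _ (by omega) (by omega) (by omega)) h0
    have hle : hsNormSq (D * A * D - A)
        ≤ 2 * ∑ k : Fin m, (if (k : ℕ) < l then 0 else ∑ j, A j k ^ 2) := by
      have e1 : ∑ k : Fin m, (if (k : ℕ) < l then 0 else ∑ j, A j k ^ 2)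
          = ∑ k : Fin m, ∑ j : Fin m, (if (k : ℕ) < l then 0 else A k j ^ 2) := by
        refine Finset.sum_congr rfl fun k _ => ?_
        split_ifs
        · simp
        · exact Finset.sum_congr rfl fun j _ => by rw [hAs]
      have e2 : ∑ k : Fin m, (if (k : ℕ) < l then 0 else ∑ j, A j k ^ 2)
          = ∑ j : Fin m, ∑ k : Fin m, (if (k : ℕ) < l then 0 else A j k ^ 2) := by
        rw [Finset.sum_comm]
        refine Finset.sum_congr rfl fun k _ => ?_
        split_ifs <;> simp
      rw [two_mul]
      nth_rewrite 1 [e1]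
      rw [e2, ← Finset.sum_add_distrib]
      unfold hsNormSq
      refine Finset.sum_le_sum fun i _ => ?_
      rw [← Finset.sum_add_distrib]
      refine Finset.sum_le_sum fun j _ => ?_
      rw [Matrix.sub_apply, hB]
      have := sq_nonneg (A i j)
      by_cases h1 : (i : ℕ) < l <;> by_cases h2 : (j : ℕ) < l <;> simp [h1, h2, this]
    unfold l2PiSq
    rw [hTS, div_le_div_iff₀ hm0 hpos]
    nlinarith [mul_le_mul_of_nonneg_left hle hpos.le]
  · rw [hT, hA]
    refine le_trans ?_ hrank
    have : Q * (D * (Q.transpose * S * Q) * D) * Q.transpose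
        = (Q * D * Q.transpose) * S * (Q * D * Q.transpose) := by
      simp only [Matrix.mul_assoc]
    rw [this]
    exact (Matrix.rank_mul_le_left _ _).trans (Matrix.rank_mul_le_right _ _)
  · unfold l2PiSq
    rw [hT2, hS2]
    refine div_le_div_of_nonneg_right ?_ hm0.le
    unfold hsNormSq
    refine Finset.sum_le_sum fun i _ => Finset.sum_le_sum fun j _ => ?_
    rw [hB]
    split_ifs
    · exact le_rfl
    · simpa using sq_nonneg (A i j)

end
end

section
/- Lower bound on the regularized coherence function: For every S ∈ 𝒮_V with r := rank(S) ≥ 1 and every λ ≥ λ₁ (λ > 0), the regularized coherence function satisfies φ̄(S;λ) ≥ (r/m)·F̄(λ) ≥ (r/m)·F(λ). -/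
open MeasureTheory Finset
open scoped ENNReal NNReal

noncomputable section

theorem sum_projSuppNormSq {m : ℕ} (φ : ℕ → Fin m → ℝ) (hφ : OrthonormalFamily m φ)
    (S : Matrix (Fin m) (Fin m) ℝ) :
    ∑ j ∈ Finset.Icc 1 m, projSuppNormSq S (φ j) = S.rank := by
  classical
  have hon : Orthonormal ℝ (fun i : Fin m =>
      (WithLp.toLp 2 (φ (i.1 + 1)) : EuclideanSpace ℝ (Fin m))) := by
    rw [orthonormal_iff_ite]
    intro i j
    have h := hφ (i.1 + 1) (Finset.mem_Icc.2 ⟨by omega, by omega⟩)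
      (j.1 + 1) (Finset.mem_Icc.2 ⟨by omega, by omega⟩)
    have h2 : (i.1 + 1 = j.1 + 1) ↔ i = j := by rw [Fin.ext_iff]; omega
    simp only [h2] at h
    rw [← h]
    simp [PiLp.inner_apply, mul_comm]
  obtain ⟨b, hb⟩ := Orthonormal.exists_orthonormalBasis_extension_of_card_eq
    (𝕜 := ℝ) (E := EuclideanSpace ℝ (Fin m)) (ι := Fin m) (by simp)
    (v := fun i : Fin m => (WithLp.toLp 2 (φ (i.1 + 1)) : EuclideanSpace ℝ (Fin m)))
    (s := Set.univ) (hon.comp _ Subtype.val_injective)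
  set L := LinearMap.range (Matrix.toEuclideanLin S) with hL
  have htr := LinearMap.trace_eq_sum_inner (L.starProjection : _ →ₗ[ℝ] _) b
  have hproj : LinearMap.IsProj L
      (L.starProjection : EuclideanSpace ℝ (Fin m) →ₗ[ℝ] EuclideanSpace ℝ (Fin m)) :=
    ⟨fun x => L.starProjection_apply_mem x,
      fun x hx => Submodule.starProjection_eq_self_iff.2 hx⟩
  rw [hproj.trace] at htr
  have hrank : S.rank = Module.finrank ℝ L := by
    rw [hL, Matrix.toEuclideanLin_eq_toLin]
    exact Matrix.rank_eq_finrank_range_toLin S _ _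
  rw [hrank, htr, Finset.sum_bij' (t := Finset.univ)
    (g := fun i : Fin m => projSuppNormSq S (φ (i.1 + 1)))
    (fun j hj => (⟨j - 1, by rw [Finset.mem_Icc] at hj; omega⟩ : Fin m))
    (fun i _ => i.1 + 1)]
  · refine Finset.sum_congr rfl fun i _ => ?_
    rw [hb i (Set.mem_univ i)]
    set x : EuclideanSpace ℝ (Fin m) := WithLp.toLp 2 (φ (i.1 + 1)) with hx
    have h1 : projSuppNormSq S (φ (i.1 + 1)) = ‖L.starProjection x‖ ^ 2 := rfl
    rw [h1, ← real_inner_self_eq_norm_sq, Submodule.inner_starProjection_left_eq_right]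
    congr 1
    exact Submodule.starProjection_eq_self_iff.2 (L.starProjection_apply_mem x)
  · intro a _; exact Finset.mem_univ _
  · intro a _; exact Finset.mem_Icc.2 ⟨by omega, by omega⟩
  · intro a ha; rw [Finset.mem_Icc] at ha; simp only; omega
  · intro a _; ext; simp
  · intro a ha
    rw [Finset.mem_Icc] at ha
    have : a - 1 + 1 = a := by omega
    simp only [this]

theorem cohFn_le_rank {m : ℕ} (lam : ℕ → ℝ) (φ : ℕ → Fin m → ℝ) (hφ : OrthonormalFamily m φ)
    (S : Matrix (Fin m) (Fin m) ℝ) (t : ℝ) : cohFn lam φ S t ≤ S.rank := by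
  rw [← sum_projSuppNormSq φ hφ S]
  exact Finset.sum_le_sum_of_subset_of_nonneg (Finset.filter_subset _ _)
    fun _ _ _ => sq_nonneg _

/-- **Lower bound on the regularized coherence function:**
`φ̄(S;λ) ≥ (r/m)·F̄(λ) ≥ (r/m)·F(λ)`. -/
theorem cohBar_lower_bound :
    ∀ (m : ℕ) (lam : ℕ → ℝ) (φ : ℕ → Fin m → ℝ) (Fbar : ℝ → ℝ)
      (S : Matrix (Fin m) (Fin m) ℝ),
      1 ≤ m →
      OrthonormalFamily m φ →
      (∀ k ∈ Finset.Icc 1 m, 0 ≤ lam k) →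
      (∀ k k' : ℕ, 1 ≤ k → k ≤ k' → k' ≤ m → lam k ≤ lam k') →
      -- `F̄` is a nondecreasing positive majorant of `F` with `F̄(t)/t` nonincreasing
      -- and `F̄(t) = m` for `t ≥ λ_m`
      (∀ t : ℝ, 0 < t → 0 < Fbar t) →
      (∀ s t : ℝ, 0 < s → s ≤ t → Fbar s ≤ Fbar t) →
      (∀ t : ℝ, 0 < t → (specFn m lam t : ℝ) ≤ Fbar t) →
      (∀ s t : ℝ, 0 < s → s ≤ t → Fbar t / t ≤ Fbar s / s) →
      (∀ t : ℝ, lam m ≤ t → Fbar t = m) →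
      S.IsSymm → 1 ≤ S.rank →
      ∀ t : ℝ, 0 < t → lam 1 ≤ t →
        (S.rank : ℝ) / m * Fbar t ≤ cohBar lam φ Fbar S t ∧
          (S.rank : ℝ) / m * (specFn m lam t : ℝ) ≤ (S.rank : ℝ) / m * Fbar t := by
  intro m lam φ Fbar S hm hφ _ hmono hpos hFm hmaj _ htop _ _ t ht _
  have hbd : ∀ σ : ℝ, 0 < σ → ∀ y ∈ (fun σ' => cohFn lam φ S σ' / Fbar σ') '' Set.Ici σ,
      y ≤ S.rank / Fbar σ := by
    rintro σ hσ _ ⟨s, hs, rfl⟩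
    exact div_le_div₀ (Nat.cast_nonneg _) (cohFn_le_rank lam φ hφ S s) (hpos σ hσ)
      (hFm σ s hσ hs)
  refine ⟨?_, mul_le_mul_of_nonneg_left (hmaj t ht) (by positivity)⟩
  have hinner : (S.rank : ℝ) / m ≤
      sSup ((fun σ' => cohFn lam φ S σ' / Fbar σ') '' Set.Ici t) := by
    refine le_csSup ⟨_, hbd t ht⟩ ⟨max t (lam m), Set.mem_Ici.2 (le_max_left _ _), ?_⟩
    have h : cohFn lam φ S (max t (lam m)) = S.rank := by
      rw [← sum_projSuppNormSq φ hφ S, cohFn, Finset.filter_true_of_mem]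
      intro j hj
      rw [Finset.mem_Icc] at hj
      exact (hmono j m hj.1 hj.2 le_rfl).trans (le_max_right _ _)
    simp only [h, htop _ (le_max_right t (lam m))]
  calc (S.rank : ℝ) / m * Fbar t
      ≤ Fbar t * sSup ((fun σ' => cohFn lam φ S σ' / Fbar σ') '' Set.Ici t) := by
        rw [mul_comm]; exact mul_le_mul_of_nonneg_left hinner (hpos t ht).le
    _ ≤ cohBar lam φ Fbar S t := by
        refine le_csSup ⟨(S.rank : ℝ), ?_⟩ ⟨t, ⟨ht, le_rfl⟩, rfl⟩
        rintro _ ⟨σ, ⟨hσ, _⟩, rfl⟩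
        have h := csSup_le (Set.Nonempty.image _ ⟨σ, Set.mem_Ici.2 le_rfl⟩) (hbd σ hσ)
        rw [le_div_iff₀ (hpos σ hσ)] at h
        simpa [mul_comm] using h

end
end
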